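/- Let b>0, d∈ℕ, let (G_n)_{n≥0} be a (b,d)-expander, let α < 1/2 with α>0, and let c∈(0,1). There is a constant C_3, depending only on c, α, b, and d, such that for every n: p_{n,1−α}(c) − p_{n,α}(c) ≤ C_3 · (log|V_n|)^{−1/3}. -/

import Mathlib

open Filter

noncomputable section

/-- The spanning subgraph of `G` determined by the configuration `x : {0,1}^E`:
an edge of `G` is retained iff its coordinate equals `true`. -/
def percoGraph {V : Type*} (G : SimpleGraph V) (x : G.edgeSet → Bool) : SimpleGraph V :=
  SimpleGraph.fromEdgeSet {e : Sym2 V | ∃ h : e ∈ G.edgeSet, x ⟨e, h⟩ = true}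

/-- The vertex set of the connected component of `v` in the configuration `x`. -/
def percoComp {V : Type*} (G : SimpleGraph V) (x : G.edgeSet → Bool) (v : V) : Set V :=
  {u | (percoGraph G x).Reachable v u}

/-- The number of vertices of the connected component of `v` in the configuration `x`. -/
def compSize {V : Type*} (G : SimpleGraph V) (x : G.edgeSet → Bool) (v : V) : ℕ :=
  (percoComp G x v).ncard

/-- `L⁽¹⁾`: the number of vertices of the largest connected component of the configuration. -/
def largestComp {V : Type*} (G : SimpleGraph V) (x : G.edgeSet → Bool) : ℕ :=
  sSup (Set.range (compSize G x))

/-- The probability of a single configuration under the product Bernoulli(p) measure. -/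
def configProb {E : Type*} (p : ℝ) (x : E → Bool) : ℝ :=
  ∏ᶠ e : E, if x e then p else 1 - p

/-- The product Bernoulli(p) probability of a set of configurations. -/
def probC {E : Type*} (p : ℝ) (A : Set (E → Bool)) : ℝ :=
  ∑ᶠ x ∈ A, configProb p x

/-- Expectation under the product Bernoulli(p) measure. -/
def expC {E : Type*} (p : ℝ) (f : (E → Bool) → ℝ) : ℝ :=
  ∑ᶠ x : E → Bool, configProb p x * f x

/-- Variance under the product Bernoulli(p) measure. -/
def varC {E : Type*} (p : ℝ) (f : (E → Bool) → ℝ) : ℝ :=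
  expC p (fun x => f x ^ 2) - (expC p f) ^ 2

open Classical in
/-- The configuration `x` with coordinate `e` set to `b`. -/
def setEdge {E : Type*} (x : E → Bool) (e : E) (b : Bool) : E → Bool :=
  fun e' => if e' = e then b else x e'

/-- The operator `Δ_{e,p} f (x) = f(x) - ∫ f(x) dx(e)`. -/
def deltaE {E : Type*} (p : ℝ) (f : (E → Bool) → ℝ) (e : E) (x : E → Bool) : ℝ :=
  f x - (p * f (setEdge x e true) + (1 - p) * f (setEdge x e false))

/-- The norm `‖g‖_{1,p}`. -/
def norm1 {E : Type*} (p : ℝ) (g : (E → Bool) → ℝ) : ℝ :=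
  expC p fun x => |g x|

/-- The squared norm `‖g‖_{2,p}²`. -/
def sqNorm2 {E : Type*} (p : ℝ) (g : (E → Bool) → ℝ) : ℝ :=
  expC p fun x => g x ^ 2

/-- `|E(S, Sᶜ)|`: the number of edges of `G` with one endpoint in `S` and the other outside `S`
(counted via the ordered pair whose first coordinate lies in `S`). -/
def edgeBoundaryCard {V : Type*} (G : SimpleGraph V) (S : Set V) : ℕ :=
  {q : V × V | G.Adj q.1 q.2 ∧ q.1 ∈ S ∧ q.2 ∉ S}.ncard

/-- The maximal degree of `G` is at most `d`. -/
def DegreeLE {V : Type*} (G : SimpleGraph V) (d : ℕ) : Prop :=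
  ∀ v, {u | G.Adj v u}.ncard ≤ d

/-- The Cheeger (edge-isoperimetric) constant of `G` is strictly greater than `b`. -/
def CheegerGT {V : Type*} (G : SimpleGraph V) (b : ℝ) : Prop :=
  ∀ S : Set V, 0 < S.ncard → 2 * S.ncard ≤ Nat.card V →
    b * (S.ncard : ℝ) < (edgeBoundaryCard G S : ℝ)

/-- A `(b,d)`-expander: a sequence of finite graphs with `|V_n| → ∞`, maximal degree at most `d`
and Cheeger constant greater than `b`. -/
structure ExpanderSeq (b : ℝ) (d : ℕ) where
  V : ℕ → Type
  finV : ∀ n, Finite (V n)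
  G : ∀ n, SimpleGraph (V n)
  card_tendsto : Tendsto (fun n => Nat.card (V n)) atTop atTop
  degree_le : ∀ n, DegreeLE (G n) d
  cheeger_gt : ∀ n, CheegerGT (G n) b



set_option linter.unusedSectionVars false
section Meas
variable {ι : Type*} [Fintype ι] [DecidableEq ι]

/-- weight of one coordinate -/
def wt (p : ℝ) (t : Bool) : ℝ := if t then p else 1 - p

/-- product weight -/
def pr (p : ℝ) (x : ι → Bool) : ℝ := ∏ e, wt p (x e)

/-- expectation -/
def ex (p : ℝ) (f : (ι → Bool) → ℝ) : ℝ := ∑ x, pr p x * f x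

/-- difference along a coordinate -/
def gr (f : (ι → Bool) → ℝ) (e : ι) (x : ι → Bool) : ℝ :=
  f (Function.update x e true) - f (Function.update x e false)

/-- averaging along a coordinate -/
def av (p : ℝ) (e : ι) (f : (ι → Bool) → ℝ) (x : ι → Bool) : ℝ :=
  p * f (Function.update x e true) + (1 - p) * f (Function.update x e false)

lemma wt_nonneg {p : ℝ} (hp : p ∈ Set.Icc (0:ℝ) 1) (t : Bool) : 0 ≤ wt p t := by
  obtain ⟨h0, h1⟩ := hp
  unfold wt; split_ifs <;> linarith

lemma pr_nonneg {p : ℝ} (hp : p ∈ Set.Icc (0:ℝ) 1) (x : ι → Bool) : 0 ≤ pr p x :=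
  Finset.prod_nonneg fun _ _ => wt_nonneg hp _

lemma ex_mono {p : ℝ} (hp : p ∈ Set.Icc (0:ℝ) 1) {f g : (ι → Bool) → ℝ} (h : ∀ x, f x ≤ g x) :
    ex p f ≤ ex p g :=
  Finset.sum_le_sum fun x _ => mul_le_mul_of_nonneg_left (h x) (pr_nonneg hp x)

lemma ex_nonneg {p : ℝ} (hp : p ∈ Set.Icc (0:ℝ) 1) {f : (ι → Bool) → ℝ} (h : ∀ x, 0 ≤ f x) :
    0 ≤ ex p f :=
  Finset.sum_nonneg fun x _ => mul_nonneg (pr_nonneg hp x) (h x)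

lemma ex_add (p : ℝ) (f g : (ι → Bool) → ℝ) :
    ex p (fun x => f x + g x) = ex p f + ex p g := by
  simp [ex, mul_add, Finset.sum_add_distrib]

lemma ex_sub (p : ℝ) (f g : (ι → Bool) → ℝ) :
    ex p (fun x => f x - g x) = ex p f - ex p g := by
  simp [ex, mul_sub, Finset.sum_sub_distrib]

lemma ex_smul (p a : ℝ) (f : (ι → Bool) → ℝ) :
    ex p (fun x => a * f x) = a * ex p f := by
  simp only [ex, Finset.mul_sum]
  exact Finset.sum_congr rfl fun x _ => by ring

lemma ex_sum {κ : Type*} (p : ℝ) (s : Finset κ) (f : κ → (ι → Bool) → ℝ) :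
    ex p (fun x => ∑ i ∈ s, f i x) = ∑ i ∈ s, ex p (f i) := by
  simp only [ex, Finset.mul_sum]
  exact Finset.sum_comm

lemma sum_pr (p : ℝ) : ∑ x : ι → Bool, pr p x = 1 := by
  have := Finset.prod_univ_sum (fun _ : ι => (Finset.univ : Finset Bool)) (fun _ t => wt p t)
  simp only [Fintype.piFinset_univ] at this
  unfold pr
  rw [← this]
  simp [wt]

lemma ex_const (p a : ℝ) : ex p (fun _ : ι → Bool => a) = a := by
  simp [ex, ← Finset.sum_mul, sum_pr]

/-- flip a coordinate -/
def flipE (e : ι) : (ι → Bool) ≃ (ι → Bool) where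
  toFun x := Function.update x e (!(x e))
  invFun x := Function.update x e (!(x e))
  left_inv x := by simp
  right_inv x := by simp

/-- product of the weights of the other coordinates -/
def prE (p : ℝ) (e : ι) (x : ι → Bool) : ℝ := ∏ j ∈ Finset.univ.erase e, wt p (x j)

lemma pr_eq (p : ℝ) (e : ι) (x : ι → Bool) : pr p x = prE p e x * wt p (x e) := by
  unfold pr prE
  rw [Finset.prod_erase_mul _ _ (Finset.mem_univ e)]

lemma prE_update (p : ℝ) (e : ι) (x : ι → Bool) (t : Bool) :
    prE p e (Function.update x e t) = prE p e x := by
  unfold prE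
  refine Finset.prod_congr rfl fun j hj => ?_
  rw [Function.update_of_ne (Finset.ne_of_mem_erase hj)]

lemma sum_prE (p : ℝ) (e : ι) (g : (ι → Bool) → ℝ) :
    ∑ x, prE p e x * g x
      = ex p (fun x => g (Function.update x e true) + g (Function.update x e false)) := by
  have h1 : ∀ x : ι → Bool, prE p e x * g x
      = pr p x * g x + prE p e x * wt p (!(x e)) * g x := by
    intro x
    have : wt p (x e) + wt p (!(x e)) = 1 := by
      cases x e <;> simp [wt]
    rw [pr_eq p e x]
    linear_combination (- prE p e x * g x) * this
  have h2 : ∑ x : ι → Bool, prE p e x * wt p (!(x e)) * g x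
      = ∑ x : ι → Bool, pr p x * g (Function.update x e (!(x e))) := by
    rw [← Equiv.sum_comp (flipE e)]
    refine Finset.sum_congr rfl fun x _ => ?_
    simp [flipE, prE_update, pr_eq p e x]
  simp only [h1, Finset.sum_add_distrib, h2]
  rw [← Finset.sum_add_distrib]
  unfold ex
  refine Finset.sum_congr rfl fun x _ => ?_
  rw [← mul_add]
  congr 1
  cases h : x e
  · have : Function.update x e false = x := by rw [← h]; simp
    simp only [this, Bool.not_false]; ring
  · have : Function.update x e true = x := by rw [← h]; simp
    simp only [this, Bool.not_true]

lemma ex_av (p : ℝ) (e : ι) (f : (ι → Bool) → ℝ) : ex p (av p e f) = ex p f := by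
  have := sum_prE p e (fun x => wt p (x e) * f x)
  simp only [← mul_assoc, ← pr_eq] at this
  unfold ex at this ⊢
  rw [this]
  simp [av, wt]

lemma hasDerivAt_wt (p : ℝ) (t : Bool) :
    HasDerivAt (fun p => wt p t) (if t then 1 else -1) p := by
  cases t
  · simpa [wt] using (hasDerivAt_id p).const_sub 1
  · simpa [wt] using hasDerivAt_id' p

/-- Russo's formula -/
lemma hasDerivAt_ex (p : ℝ) (f : (ι → Bool) → ℝ) :
    HasDerivAt (fun p => ex p f) (∑ e, ex p (gr f e)) p := by
  have h : HasDerivAt (fun p => ex p f)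
      (∑ x : ι → Bool, (∑ e, prE p e x * (if x e then 1 else -1)) * f x) p := by
    unfold ex
    refine HasDerivAt.fun_sum fun x _ => HasDerivAt.mul_const ?_ _
    unfold pr
    have := HasDerivAt.fun_finsetProd (u := Finset.univ) (f := fun e p => wt p (x e))
      (f' := fun e => if x e then (1:ℝ) else -1) (x := p) (fun e _ => hasDerivAt_wt p (x e))
    simpa [prE, smul_eq_mul] using this
  convert h using 1
  simp only [Finset.sum_mul]
  rw [Finset.sum_comm]
  refine Finset.sum_congr rfl fun e _ => ?_
  have := sum_prE p e (fun x => (if x e then 1 else -1) * f x)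
  simp only [← mul_assoc] at this
  rw [this]
  congr 1
  funext x
  simp [gr, sub_eq_add_neg]

lemma ex_monotone {f : (ι → Bool) → ℝ} (hf : ∀ e x, 0 ≤ gr f e x) :
    MonotoneOn (fun p => ex p f) (Set.Icc (0:ℝ) 1) := by
  apply monotoneOn_of_deriv_nonneg (convex_Icc 0 1)
  · exact fun p _ => (hasDerivAt_ex p f).continuousAt.continuousWithinAt
  · exact fun p _ => (hasDerivAt_ex p f).differentiableAt.differentiableWithinAt
  · intro p hp
    rw [interior_Icc] at hp
    rw [(hasDerivAt_ex p f).deriv]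
    exact Finset.sum_nonneg fun e _ => ex_nonneg ⟨hp.1.le, hp.2.le⟩ (hf e)

lemma ex_sq_av (p : ℝ) (e : ι) (f : (ι → Bool) → ℝ) :
    ex p (fun x => f x ^ 2)
      = ex p (fun x => av p e f x ^ 2) + p * (1 - p) * ex p (fun x => gr f e x ^ 2) := by
  rw [← ex_av p e (fun x => f x ^ 2), ← ex_smul, ← ex_add]
  congr 1
  funext x
  simp only [av, gr]
  ring

lemma efron_stein {p : ℝ} (hp : p ∈ Set.Icc (0:ℝ) 1) {k : ℝ} (S : Finset ι) :
    ∀ f : (ι → Bool) → ℝ, (∀ x y, (∀ e ∈ S, x e = y e) → f x = f y) →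
      (∀ e x, |gr f e x| ≤ k) →
      ex p (fun x => f x ^ 2) - ex p f ^ 2 ≤ S.card * k ^ 2 := by
  induction S using Finset.induction_on with
  | empty =>
    intro f hf _
    have : f = fun _ => f (fun _ => true) := by
      funext x; exact hf _ _ (by simp)
    rw [this]
    simp [ex_const]
  | insert e S he ih =>
    intro f hf hk
    have hk0 : ∀ x, gr f e x ^ 2 ≤ k ^ 2 := fun x => sq_le_sq' (by
      have := abs_le.1 (hk e x); linarith) (abs_le.1 (hk e x)).2
    have h1 := ih (av p e f) ?_ ?_
    · rw [ex_av] at h1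
      rw [ex_sq_av p e f, Finset.card_insert_of_notMem he]
      have h2 : ex p (fun x => gr f e x ^ 2) ≤ k ^ 2 := by
        calc _ ≤ ex p (fun _ => k ^ 2) := ex_mono hp hk0
          _ = _ := ex_const _ _
      have h3 : 0 ≤ ex p (fun x => gr f e x ^ 2) := ex_nonneg hp fun x => sq_nonneg _
      push_cast
      obtain ⟨hp0, hp1⟩ := hp
      have h4 : p * (1 - p) ≤ 1 := by nlinarith
      have h5 : p * (1 - p) * ex p (fun x => gr f e x ^ 2) ≤ 1 * ex p (fun x => gr f e x ^ 2) :=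
        mul_le_mul_of_nonneg_right h4 h3
      linarith
    · intro x y hxy
      have : ∀ t, f (Function.update x e t) = f (Function.update y e t) := by
        intro t
        apply hf
        intro e' he'
        by_cases h : e' = e
        · subst h; simp
        · rw [Function.update_of_ne h, Function.update_of_ne h]
          exact hxy _ (Finset.mem_of_mem_insert_of_ne he' h)
      simp [av, this]
    · intro e' x
      have : gr (av p e f) e' x = if e' = e then 0 else av p e (gr f e') x := by
        split_ifs with h
        · subst h; simp [gr, av]
        · have h' : e ≠ e' := fun h'' => h h''.symm
          simp only [gr, av, Function.update_comm h]
          ring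
      rw [this]
      split_ifs with h
      · simpa using (abs_nonneg _).trans (hk e x)
      · have a1 := abs_le.1 (hk e' (Function.update x e true))
        have a2 := abs_le.1 (hk e' (Function.update x e false))
        obtain ⟨hp0, hp1⟩ := hp
        unfold av
        rw [abs_le]
        constructor <;> nlinarith

lemma var_le {p : ℝ} (hp : p ∈ Set.Icc (0:ℝ) 1) {k : ℝ} {f : (ι → Bool) → ℝ}
    (hk : ∀ e x, |gr f e x| ≤ k) :
    ex p (fun x => f x ^ 2) - ex p f ^ 2 ≤ Fintype.card ι * k ^ 2 :=
  efron_stein hp Finset.univ f (fun x y h => by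
    have : x = y := funext fun e => h e (Finset.mem_univ e)
    rw [this]) hk

/-- raising an edge costs a factor `1/p`. -/
lemma ex_update {p : ℝ} (hp : p ∈ Set.Icc (0:ℝ) 1) {f : (ι → Bool) → ℝ} (hf : ∀ x, 0 ≤ f x)
    (e : ι) : p * ex p (fun x => f (Function.update x e true)) ≤ ex p f := by
  rw [← ex_av p e f, ← ex_smul]
  apply ex_mono hp
  intro x
  have := hf (Function.update x e false)
  have h1 : 0 ≤ 1 - p := sub_nonneg.2 hp.2
  unfold av
  nlinarith [mul_nonneg h1 this]

lemma ex_coord (p : ℝ) (e : ι) : ex p (fun x : ι → Bool => if x e then (1:ℝ) else 0) = p := by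
  rw [← ex_av p e]
  have : av p e (fun x : ι → Bool => if x e then (1:ℝ) else 0) = fun _ => p := by
    funext x; simp [av]
  rw [this, ex_const]

open Classical in
/-- probability of an event -/
def pb (p : ℝ) (A : Set (ι → Bool)) : ℝ := ex p (fun x => if x ∈ A then 1 else 0)

lemma pb_mono {p : ℝ} (hp : p ∈ Set.Icc (0:ℝ) 1) {A B : Set (ι → Bool)} (h : A ⊆ B) :
    pb p A ≤ pb p B := by
  apply ex_mono hp
  intro x
  by_cases h1 : x ∈ A
  · simp [h1, h h1]
  · simp only [h1, if_false]; split_ifs <;> simp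

lemma pb_union {p : ℝ} (hp : p ∈ Set.Icc (0:ℝ) 1) (A B : Set (ι → Bool)) :
    pb p (A ∪ B) ≤ pb p A + pb p B := by
  unfold pb
  rw [← ex_add]
  apply ex_mono hp
  intro x
  by_cases h1 : x ∈ A <;> by_cases h2 : x ∈ B <;> simp [h1, h2]

lemma pb_compl (p : ℝ) (A : Set (ι → Bool)) : pb p Aᶜ = 1 - pb p A := by
  unfold pb
  rw [eq_sub_iff_add_eq, ← ex_add]
  refine Eq.trans ?_ (ex_const (ι := ι) p 1)
  congr 1
  funext x
  by_cases h1 : x ∈ A <;> simp [h1]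

/-- Markov inequality -/
lemma markov {p : ℝ} (hp : p ∈ Set.Icc (0:ℝ) 1) {A : Set (ι → Bool)} {f : (ι → Bool) → ℝ}
    {a : ℝ} (hf : ∀ x, 0 ≤ f x) (h : ∀ x ∈ A, a ≤ f x) : a * pb p A ≤ ex p f := by
  unfold pb
  rw [← ex_smul]
  apply ex_mono hp
  intro x
  by_cases h1 : x ∈ A
  · simpa [h1] using h x h1
  · simpa [h1] using hf x

lemma ex_var (p : ℝ) (f : (ι → Bool) → ℝ) :
    ex p (fun x => (f x - ex p f) ^ 2) = ex p (fun x => f x ^ 2) - ex p f ^ 2 := by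
  have : (fun x => (f x - ex p f) ^ 2)
      = fun x => (f x ^ 2 - (2 * ex p f) * f x) + ex p f ^ 2 := by
    funext x; ring
  rw [this, ex_add, ex_sub, ex_smul, ex_const]
  ring

lemma cheb {p : ℝ} (hp : p ∈ Set.Icc (0:ℝ) 1) {A : Set (ι → Bool)} {f : (ι → Bool) → ℝ}
    {s : ℝ} (h : ∀ x ∈ A, s ^ 2 ≤ (f x - ex p f) ^ 2) :
    s ^ 2 * pb p A ≤ ex p (fun x => f x ^ 2) - ex p f ^ 2 := by
  rw [← ex_var]
  exact markov hp (fun x => sq_nonneg _) h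

lemma probC_eq (p : ℝ) (A : Set (ι → Bool)) : probC p A = pb p A := by
  classical
  unfold probC pb ex
  rw [finsum_mem_def, finsum_eq_sum_of_fintype]
  refine Finset.sum_congr rfl fun x _ => ?_
  by_cases h : x ∈ A
  · simp [h, configProb, finprod_eq_prod_of_fintype, pr, wt]
  · simp [h]

end Meas

section Gr
open Classical

variable {V : Type} [Fintype V] {G : SimpleGraph V}

lemma perco_adj {x : G.edgeSet → Bool} {u v : V} :
    (percoGraph G x).Adj u v ↔ ∃ h : G.Adj u v, x ⟨s(u,v), h⟩ = true := by
  unfold percoGraph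
  rw [SimpleGraph.fromEdgeSet_adj]
  constructor
  · rintro ⟨⟨h, hx⟩, -⟩; exact ⟨h, hx⟩
  · rintro ⟨h, hx⟩; exact ⟨⟨h, hx⟩, h.ne⟩

lemma perco_mono {x y : G.edgeSet → Bool} (h : x ≤ y) : percoGraph G x ≤ percoGraph G y := by
  intro u v huv
  rw [perco_adj] at huv ⊢
  obtain ⟨h1, h2⟩ := huv
  refine ⟨h1, ?_⟩
  have := h ⟨s(u,v), h1⟩
  rw [h2] at this
  exact Bool.eq_true_of_true_le this

lemma comp_mono {x y : G.edgeSet → Bool} (h : x ≤ y) (v : V) :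
    percoComp G x v ⊆ percoComp G y v := fun _ hu => SimpleGraph.Reachable.mono (perco_mono h) hu

lemma self_mem_comp (x : G.edgeSet → Bool) (v : V) : v ∈ percoComp G x v :=
  SimpleGraph.Reachable.refl _

lemma comp_eq {x : G.edgeSet → Bool} {u v : V} (h : u ∈ percoComp G x v) :
    percoComp G x u = percoComp G x v := by
  ext w
  exact ⟨fun hw => SimpleGraph.Reachable.trans h hw,
    fun hw => SimpleGraph.Reachable.trans (SimpleGraph.Reachable.symm h) hw⟩

lemma comp_symm {x : G.edgeSet → Bool} {u v : V} (h : u ∈ percoComp G x v) :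
    v ∈ percoComp G x u := SimpleGraph.Reachable.symm h

lemma comp_disj {x : G.edgeSet → Bool} {u v : V} (h : v ∉ percoComp G x u) :
    Disjoint (percoComp G x u) (percoComp G x v) := by
  rw [Set.disjoint_left]
  intro w hw hw'
  exact h (SimpleGraph.Reachable.trans hw (SimpleGraph.Reachable.symm hw'))

lemma size_pos (x : G.edgeSet → Bool) (v : V) : 1 ≤ compSize G x v := by
  unfold compSize
  rw [Nat.one_le_iff_ne_zero, ← Nat.pos_iff_ne_zero, Set.ncard_pos]
  exact ⟨v, self_mem_comp x v⟩

lemma size_le (x : G.edgeSet → Bool) (v : V) : compSize G x v ≤ Fintype.card V := by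
  unfold compSize
  rw [← Nat.card_eq_fintype_card]
  exact Set.ncard_le_card _

lemma size_mono {x y : G.edgeSet → Bool} (h : x ≤ y) (v : V) :
    compSize G x v ≤ compSize G y v := Set.ncard_le_ncard (comp_mono h v) (Set.toFinite _)

/-- truncated density -/
def phi (k : ℝ) (s : ℕ) : ℝ := max 0 (1 - k / s)

lemma phi_nonneg (k : ℝ) (s : ℕ) : 0 ≤ phi k s := le_max_left _ _

lemma phi_le_one {k : ℝ} (hk : 0 ≤ k) (s : ℕ) : phi k s ≤ 1 :=
  max_le zero_le_one (by have : 0 ≤ k / s := by positivity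
                         linarith)

lemma phi_mono {k : ℝ} (hk : 0 ≤ k) {s t : ℕ} (hs : 1 ≤ s) (h : s ≤ t) : phi k s ≤ phi k t := by
  unfold phi
  have hs' : (0:ℝ) < s := by exact_mod_cast hs
  have h' : (s:ℝ) ≤ t := by exact_mod_cast h
  have : k / t ≤ k / s := div_le_div_of_nonneg_left hk hs' h'
  exact max_le_max le_rfl (by linarith)

lemma mul_phi {k : ℝ} {s : ℕ} (hs : 1 ≤ s) : s * phi k s = max 0 (s - k) := by
  unfold phi
  have hs' : (0:ℝ) < s := by exact_mod_cast hs
  rw [mul_max_of_nonneg _ _ hs'.le, mul_zero, mul_sub, mul_div_cancel₀ _ hs'.ne', mul_one]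

/-- the main functional -/
def Phi (k : ℝ) (G : SimpleGraph V) (x : G.edgeSet → Bool) : ℝ := ∑ v, phi k (compSize G x v)

lemma Phi_nonneg (k : ℝ) (x : G.edgeSet → Bool) : 0 ≤ Phi k G x :=
  Finset.sum_nonneg fun _ _ => phi_nonneg _ _

lemma Phi_le {k : ℝ} (hk : 0 ≤ k) (x : G.edgeSet → Bool) : Phi k G x ≤ Fintype.card V := by
  calc Phi k G x ≤ ∑ _v : V, (1:ℝ) := Finset.sum_le_sum fun _ _ => phi_le_one hk _
    _ = _ := by simp

lemma Phi_mono {k : ℝ} (hk : 0 ≤ k) {x y : G.edgeSet → Bool} (h : x ≤ y) :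
    Phi k G x ≤ Phi k G y :=
  Finset.sum_le_sum fun v _ => phi_mono hk (size_pos x v) (size_mono h v)

lemma sum_comp_const (x : G.edgeSet → Bool) (u : V) (a : ℝ) :
    ∑ _w ∈ (percoComp G x u).toFinset, a = compSize G x u * a := by
  rw [Finset.sum_const, nsmul_eq_mul, compSize, Set.ncard_eq_toFinset_card']

lemma sum_comp_phi (k : ℝ) (x : G.edgeSet → Bool) (u : V) :
    ∑ w ∈ (percoComp G x u).toFinset, phi k (compSize G x w) = max 0 (compSize G x u - k) := by
  rw [← mul_phi (size_pos x u), ← sum_comp_const]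
  refine Finset.sum_congr rfl fun w hw => ?_
  rw [Set.mem_toFinset] at hw
  unfold compSize
  rw [comp_eq hw]

lemma size_sub_le_Phi (k : ℝ) (x : G.edgeSet → Bool) (u : V) :
    compSize G x u - k ≤ Phi k G x := by
  calc (compSize G x u - k : ℝ) ≤ max 0 (compSize G x u - k) := le_max_right _ _
    _ = _ := (sum_comp_phi k x u).symm
    _ ≤ _ := Finset.sum_le_sum_of_subset_of_nonneg (Finset.subset_univ _)
      fun _ _ _ => phi_nonneg _ _

/-- connecting a big component to another one -/
lemma Phi_gain {k : ℝ} (hk : 0 ≤ k) {x y : G.edgeSet → Bool} (hxy : x ≤ y) {u v : V}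
    (huv : v ∉ percoComp G x u) (hy : v ∈ percoComp G y u) (hu : k ≤ compSize G x u) :
    min k (compSize G x v) ≤ Phi k G y - Phi k G x := by
  set A := (percoComp G x u).toFinset with hA
  set B := (percoComp G x v).toFinset with hB
  have hAB : Disjoint A B := by
    rw [hA, hB, Set.disjoint_toFinset]; exact comp_disj huv
  set t := compSize G x u + compSize G x v with ht
  have key : ∀ w ∈ A ∪ B, phi k t ≤ phi k (compSize G y w) := by
    intro w hw
    have hw' : w ∈ percoComp G y u := by
      rw [Finset.mem_union, hA, hB, Set.mem_toFinset, Set.mem_toFinset] at hw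
      rcases hw with hw | hw
      · exact comp_mono hxy _ hw
      · exact SimpleGraph.Reachable.trans hy (comp_mono hxy _ hw)
    apply phi_mono hk
    · have := size_pos x u; omega
    · have h1 : (percoComp G x u ∪ percoComp G x v) ⊆ percoComp G y w := by
        rw [comp_eq hw']
        rintro z (hz | hz)
        · exact comp_mono hxy _ hz
        · exact SimpleGraph.Reachable.trans hy (comp_mono hxy _ hz)
      have h2 := Set.ncard_le_ncard h1 (Set.toFinite _)
      rw [Set.ncard_union_eq (comp_disj huv)] at h2
      exact h2
  have hsum : ∑ w ∈ A ∪ B, (phi k t - phi k (compSize G x w)) ≤ Phi k G y - Phi k G x := by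
    unfold Phi
    rw [← Finset.sum_sub_distrib]
    calc _ ≤ ∑ w ∈ A ∪ B, (phi k (compSize G y w) - phi k (compSize G x w)) :=
          Finset.sum_le_sum fun w hw => by linarith [key w hw]
      _ ≤ _ := Finset.sum_le_sum_of_subset_of_nonneg (Finset.subset_univ _) fun w _ _ => by
          linarith [phi_mono hk (size_pos x w) (size_mono hxy w)]
  refine le_trans ?_ hsum
  rw [Finset.sum_union hAB, Finset.sum_sub_distrib, Finset.sum_sub_distrib, sum_comp_phi,
    sum_comp_phi, sum_comp_const, sum_comp_const]
  have h1 := mul_phi (k := k) (s := t) (by have := size_pos x u; omega)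
  have h2 : ((t:ℕ):ℝ) = compSize G x u + compSize G x v := by rw [ht]; push_cast; rfl
  have h3 : max (0:ℝ) (compSize G x u - k) = compSize G x u - k := max_eq_right (by linarith)
  have h4 : (t:ℝ) - k ≤ max 0 ((t:ℝ) - k) := le_max_right _ _
  rw [h3]
  have h5 : min k (compSize G x v : ℝ) + max 0 ((compSize G x v : ℝ) - k) ≤ compSize G x v := by
    rcases le_total k (compSize G x v : ℝ) with h | h
    · rw [min_eq_left h, max_eq_right (by linarith)]; linarith
    · rw [min_eq_right h, max_eq_left (by linarith)]; linarith
  rw [h2] at h1 h4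
  linarith

lemma update_le (x : G.edgeSet → Bool) (e : G.edgeSet) :
    Function.update x e false ≤ Function.update x e true := by
  intro e'
  by_cases h : e' = e
  · subst h; simp
  · simp [h]

lemma le_update (x : G.edgeSet → Bool) (e : G.edgeSet) : x ≤ Function.update x e true := by
  intro e'
  by_cases h : e' = e
  · subst h; simp [Bool.le_true]
  · simp [h]

lemma update_le' (x : G.edgeSet → Bool) (e : G.edgeSet) : Function.update x e false ≤ x := by
  intro e'
  by_cases h : e' = e
  · subst h; simp [Bool.false_le]
  · simp [h]

lemma gr_nonneg {k : ℝ} (hk : 0 ≤ k) (e : G.edgeSet) (x : G.edgeSet → Bool) :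
    0 ≤ gr (Phi k G) e x := sub_nonneg.2 (Phi_mono hk (update_le x e))

lemma adj_update {x : G.edgeSet → Bool} {u v a b : V} (h : G.Adj u v)
    (hab : (percoGraph G (Function.update x ⟨s(u,v), h⟩ true)).Adj a b) :
    (percoGraph G (Function.update x ⟨s(u,v), h⟩ false)).Adj a b ∨
      (a = u ∧ b = v) ∨ (a = v ∧ b = u) := by
  rw [perco_adj] at hab
  obtain ⟨h1, h2⟩ := hab
  by_cases he : s(a,b) = s(u,v)
  · right; simpa using he
  · left
    rw [perco_adj]
    refine ⟨h1, ?_⟩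
    rw [Function.update_of_ne (by simpa [Subtype.ext_iff] using he)] at h2 ⊢
    exact h2

lemma gr_le {k : ℝ} (hk : 0 ≤ k) (e : G.edgeSet) (x : G.edgeSet → Bool) :
    gr (Phi k G) e x ≤ k := by
  obtain ⟨e, he⟩ := e
  induction e using Sym2.ind with
  | _ u v =>
  have h : G.Adj u v := he
  unfold gr
  set x0 := Function.update x ⟨s(u,v), he⟩ false with hx0
  set y := Function.update x ⟨s(u,v), he⟩ true with hy
  set T : Set V := percoComp G x0 u ∪ percoComp G x0 v with hT
  have c1 : ∀ w, w ∉ T → ∀ z, z ∈ percoComp G y w → z ∈ percoComp G x0 w := by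
    intro w hw z hz
    have hz' := (SimpleGraph.reachable_iff_reflTransGen _ _).1 hz
    induction hz' with
    | refl => exact self_mem_comp _ _
    | tail hab hbc ih =>
      have ihb := ih ((SimpleGraph.reachable_iff_reflTransGen _ _).2 hab)
      rcases adj_update h hbc with h1 | ⟨h1, -⟩ | ⟨h1, -⟩
      · exact SimpleGraph.Reachable.trans ihb h1.reachable
      · exact absurd (Or.inl (comp_symm (h1 ▸ ihb))) hw
      · exact absurd (Or.inr (comp_symm (h1 ▸ ihb))) hw
  have c2 : ∀ w, w ∈ T → ∀ z, z ∈ percoComp G y w → z ∈ T := by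
    intro w hw z hz
    have hz' := (SimpleGraph.reachable_iff_reflTransGen _ _).1 hz
    induction hz' with
    | refl => exact hw
    | tail hab hbc ih =>
      have ihb := ih ((SimpleGraph.reachable_iff_reflTransGen _ _).2 hab)
      rcases adj_update h hbc with h1 | ⟨-, h1⟩ | ⟨-, h1⟩
      · rcases ihb with ihb | ihb
        · exact Or.inl (SimpleGraph.Reachable.trans ihb h1.reachable)
        · exact Or.inr (SimpleGraph.Reachable.trans ihb h1.reachable)
      · rw [h1]; exact Or.inr (self_mem_comp _ _)
      · rw [h1]; exact Or.inl (self_mem_comp _ _)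
  have huT : u ∈ T := Or.inl (self_mem_comp _ _)
  have hTpos : 1 ≤ T.ncard := by
    rw [Nat.one_le_iff_ne_zero, ← Nat.pos_iff_ne_zero, Set.ncard_pos]; exact ⟨u, huT⟩
  have hsum : Phi k G y - Phi k G x0 ≤ ∑ w ∈ T.toFinset, (phi k T.ncard - phi k (compSize G x0 w)) := by
    unfold Phi
    rw [← Finset.sum_sub_distrib, ← Finset.sum_subset (Finset.subset_univ T.toFinset)]
    · refine Finset.sum_le_sum fun w hw => ?_
      rw [Set.mem_toFinset] at hw
      have : phi k (compSize G y w) ≤ phi k T.ncard :=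
        phi_mono hk (size_pos y w) (Set.ncard_le_ncard (c2 w hw) (Set.toFinite _))
      linarith
    · intro w _ hw
      rw [Set.mem_toFinset] at hw
      have : compSize G y w = compSize G x0 w := by
        apply le_antisymm
        · exact Set.ncard_le_ncard (c1 w hw) (Set.toFinite _)
        · exact size_mono (update_le _ _) _
      rw [this]; ring
  refine hsum.trans ?_
  have e1 : ∑ w ∈ T.toFinset, phi k T.ncard = max 0 (T.ncard - k) := by
    rw [Finset.sum_const, nsmul_eq_mul, ← Set.ncard_eq_toFinset_card', mul_phi hTpos]
  rw [Finset.sum_sub_distrib, e1]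
  by_cases huv : v ∈ percoComp G x0 u
  · have : T = percoComp G x0 u := by
      rw [hT, comp_eq huv, Set.union_self]
    have hf : T.toFinset = (percoComp G x0 u).toFinset := by
      ext w; rw [Set.mem_toFinset, Set.mem_toFinset, this]
    rw [hf, sum_comp_phi, this]
    simp [compSize, hk]
  · have hd := comp_disj huv
    have hTc : T.ncard = compSize G x0 u + compSize G x0 v := Set.ncard_union_eq hd
    have : T.toFinset = (percoComp G x0 u).toFinset ∪ (percoComp G x0 v).toFinset := by
      rw [← Set.toFinset_union]
    rw [this, Finset.sum_union (Set.disjoint_toFinset.2 hd), sum_comp_phi, sum_comp_phi, hTc]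
    push_cast
    have a1 := le_max_right 0 ((compSize G x0 u : ℝ) - k)
    have a2 := le_max_right 0 ((compSize G x0 v : ℝ) - k)
    have a3 := le_max_left 0 ((compSize G x0 u : ℝ) - k)
    have a4 := le_max_left 0 ((compSize G x0 v : ℝ) - k)
    have : max 0 ((compSize G x0 u + compSize G x0 v : ℝ) - k)
        ≤ k + (max 0 ((compSize G x0 u : ℝ) - k) + max 0 ((compSize G x0 v : ℝ) - k)) := by
      apply max_le <;> linarith
    linarith

lemma abs_gr_le {k : ℝ} (hk : 0 ≤ k) (e : G.edgeSet) (x : G.edgeSet → Bool) :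
    |gr (Phi k G) e x| ≤ k := by
  rw [abs_of_nonneg (gr_nonneg hk e x)]; exact gr_le hk e x

/-- sum over ordered pairs -/
lemma pair_sum (g : G.edgeSet → ℝ) :
    ∑ u, ∑ v, (if h : G.Adj u v then g ⟨s(u,v), h⟩ else 0) = 2 * ∑ e, g e := by
  have h1 : ∀ u v, (if h : G.Adj u v then g ⟨s(u,v), h⟩ else 0)
      = ∑ e : G.edgeSet, if s(u,v) = e.1 then g e else 0 := by
    intro u v
    split_ifs with h
    · rw [Finset.sum_eq_single (⟨s(u,v), h⟩ : G.edgeSet)]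
      · simp
      · rintro ⟨e, he⟩ - hne
        rw [if_neg]
        rintro rfl
        exact hne rfl
      · simp
    · symm
      apply Finset.sum_eq_zero
      rintro ⟨e, he⟩ -
      rw [if_neg]
      rintro rfl
      exact h he
  simp only [h1]
  rw [← Finset.sum_product' (f := fun u v => ∑ e : G.edgeSet, if s(u,v) = e.1 then g e else 0),
    Finset.sum_comm, Finset.mul_sum]
  refine Finset.sum_congr rfl ?_
  rintro ⟨e, he⟩ -
  induction e using Sym2.ind with
  | _ a b =>
  have hab : a ≠ b := SimpleGraph.Adj.ne he
  rw [← Finset.sum_filter, Finset.sum_const]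
  have : Finset.filter (fun q : V × V => s(q.1, q.2) = s(a, b)) (Finset.univ ×ˢ Finset.univ)
      = {(a, b), (b, a)} := by
    ext ⟨u, v⟩
    simp
  rw [this, Finset.card_pair (by simp [hab])]
  simp

lemma deg_sum {d : ℕ} (hd : DegreeLE G d) (u : V) :
    ∑ v, (if G.Adj u v then (1:ℝ) else 0) ≤ d := by
  have := hd u
  rw [Set.ncard_eq_toFinset_card'] at this
  rw [Finset.sum_boole]
  have h2 : (Finset.univ.filter fun v => G.Adj u v) = Set.toFinset {v | G.Adj u v} := by
    ext v; simp
  rw [h2]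
  exact_mod_cast this

lemma card_edges {d : ℕ} (hd : DegreeLE G d) :
    2 * (Fintype.card G.edgeSet : ℝ) ≤ d * Fintype.card V := by
  have := pair_sum (G := G) (fun _ => (1:ℝ))
  simp only [Finset.sum_const, nsmul_eq_mul, mul_one, Finset.card_univ] at this
  rw [← this]
  calc _ ≤ ∑ _u : V, (d:ℝ) := Finset.sum_le_sum fun u _ => by simpa using deg_sum hd u
    _ = _ := by simp [mul_comm]

end Gr

section Gr2
open Classical

variable {V : Type} [Fintype V] {G : SimpleGraph V}

lemma ebc_eq (S : Set V) : (edgeBoundaryCard G S : ℝ)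
    = ∑ u, ∑ v, if G.Adj u v ∧ u ∈ S ∧ v ∉ S then (1:ℝ) else 0 := by
  unfold edgeBoundaryCard
  rw [Set.ncard_eq_toFinset_card', ← Fintype.sum_prod_type'
    (f := fun u v => if G.Adj u v ∧ u ∈ S ∧ v ∉ S then (1:ℝ) else 0), Finset.sum_boole]
  congr 2
  ext q
  simp

lemma ebc_compl (S : Set V) : edgeBoundaryCard G Sᶜ = edgeBoundaryCard G S := by
  have : (edgeBoundaryCard G Sᶜ : ℝ) = edgeBoundaryCard G S := by
    rw [ebc_eq, ebc_eq, Finset.sum_comm]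
    refine Finset.sum_congr rfl fun u _ => Finset.sum_congr rfl fun v _ => ?_
    congr 1
    simp [G.adj_comm, and_comm]
  exact_mod_cast this

lemma boundary_ge {b : ℝ} (hb : 0 < b) (hG : CheegerGT G b) {S : Set V} (hS : 0 < S.ncard) :
    b * (1 - S.ncard / Fintype.card V) * S.ncard ≤ edgeBoundaryCard G S := by
  have hle : S.ncard ≤ Fintype.card V := by
    rw [← Nat.card_eq_fintype_card]; exact Set.ncard_le_card _
  have hN : (0:ℝ) < Fintype.card V := by exact_mod_cast hS.trans_le hle
  have hS' : (0:ℝ) < S.ncard := by exact_mod_cast hS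
  have hle' : (S.ncard : ℝ) ≤ Fintype.card V := by exact_mod_cast hle
  have hq : (S.ncard : ℝ) / Fintype.card V ≤ 1 := (div_le_one hN).2 hle'
  have hq0 : 0 ≤ (S.ncard : ℝ) / Fintype.card V := by positivity
  by_cases h : 2 * S.ncard ≤ Nat.card V
  · have := hG S hS h
    nlinarith [mul_nonneg hb.le (mul_nonneg hq0 hS'.le)]
  · have hc : S.ncard + Sᶜ.ncard = Nat.card V := Set.ncard_add_ncard_compl S
    rcases Nat.eq_zero_or_pos Sᶜ.ncard with h0 | h0
    · have : (S.ncard : ℝ) = Fintype.card V := by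
        rw [← Nat.card_eq_fintype_card]; exact_mod_cast (by omega)
      rw [this, div_self hN.ne']; simp
    · have h1 := hG Sᶜ h0 (by omega)
      rw [ebc_compl] at h1
      have h2 : (Sᶜ.ncard : ℝ) = Fintype.card V - S.ncard := by
        rw [← Nat.card_eq_fintype_card, ← hc]; push_cast; ring
      rw [h2] at h1
      have h3 : (1 - (S.ncard : ℝ) / Fintype.card V) * S.ncard ≤ Fintype.card V - S.ncard := by
        have : (1 - (S.ncard : ℝ) / Fintype.card V) * S.ncard
            = (Fintype.card V - S.ncard) * ((S.ncard : ℝ) / Fintype.card V) := by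
          field_simp
        rw [this]
        nlinarith
      nlinarith

lemma gr_ge_one {k : ℝ} (hk : 1 ≤ k) (x : G.edgeSet → Bool) {u v : V} (h : G.Adj u v)
    (huv : v ∉ percoComp G x u) (hu : k ≤ compSize G x u) :
    1 ≤ gr (Phi k G) ⟨s(u,v), h⟩ x := by
  have hk0 : 0 ≤ k := by linarith
  have h1 : v ∈ percoComp G (Function.update x ⟨s(u,v), h⟩ true) u := by
    apply SimpleGraph.Adj.reachable
    rw [perco_adj]
    exact ⟨h, by simp⟩
  have h2 := Phi_gain hk0 (le_update x ⟨s(u,v), h⟩) huv h1 hu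
  have h3 : (1:ℝ) ≤ min k (compSize G x v) := le_min hk (by exact_mod_cast size_pos x v)
  have h4 := Phi_mono hk0 (update_le' x ⟨s(u,v), h⟩)
  unfold gr
  linarith

lemma growth {b : ℝ} (hb : 0 < b) (hG : CheegerGT G b) {k : ℝ} (hk : 1 ≤ k)
    (x : G.edgeSet → Bool) :
    b * (Phi k G x * (1 - (Phi k G x + k) / Fintype.card V)) ≤ 2 * ∑ e, gr (Phi k G) e x := by
  have hk0 : 0 ≤ k := by linarith
  rw [← pair_sum]
  have h1 : ∑ u, ∑ v, (if G.Adj u v ∧ k ≤ compSize G x u ∧ v ∉ percoComp G x u then (1:ℝ) else 0)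
      ≤ ∑ u, ∑ v, (if h : G.Adj u v then gr (Phi k G) ⟨s(u,v), h⟩ x else 0) := by
    refine Finset.sum_le_sum fun u _ => Finset.sum_le_sum fun v _ => ?_
    split_ifs with h h' h'
    · exact gr_ge_one hk x h' h.2.2 h.2.1
    · exact absurd h.1 h'
    · exact gr_nonneg hk0 _ _
    · exact le_rfl
  refine le_trans ?_ h1
  have h2 : ∑ u, ∑ v, (if G.Adj u v ∧ k ≤ compSize G x u ∧ v ∉ percoComp G x u then (1:ℝ) else 0)
      = ∑ w, if k ≤ compSize G x w then
          (edgeBoundaryCard G (percoComp G x w) : ℝ) / compSize G x w else 0 := by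
    have h3 : ∀ w, (if k ≤ compSize G x w then
          (edgeBoundaryCard G (percoComp G x w) : ℝ) / compSize G x w else 0)
        = ∑ u, ∑ v, if w ∈ percoComp G x u then
            (if G.Adj u v ∧ k ≤ compSize G x u ∧ v ∉ percoComp G x u then (1:ℝ) else 0)
              * (1 / compSize G x u) else 0 := by
      intro w
      split_ifs with hw
      · rw [ebc_eq, Finset.sum_div]
        refine Finset.sum_congr rfl fun u _ => ?_
        rw [Finset.sum_div]
        refine Finset.sum_congr rfl fun v _ => ?_
        by_cases hu : w ∈ percoComp G x u
        · have e1 := comp_eq hu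
          have e2 : compSize G x w = compSize G x u := by unfold compSize; rw [e1]
          rw [if_pos hu, e1, ← e2]
          have : u ∈ percoComp G x u := self_mem_comp x u
          simp only [this, hw, true_and]
          rw [mul_one_div]
        · have : u ∉ percoComp G x w := fun h => hu (comp_symm h)
          simp [hu, this]
      · symm
        refine Finset.sum_eq_zero fun u _ => Finset.sum_eq_zero fun v _ => ?_
        by_cases hu : w ∈ percoComp G x u
        · have e2 : compSize G x w = compSize G x u := by unfold compSize; rw [comp_eq hu]
          rw [if_pos hu, ← e2]
          simp [hw]
        · simp [hu]
    simp only [h3]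
    symm
    rw [Finset.sum_comm]
    refine Finset.sum_congr rfl fun u _ => ?_
    rw [Finset.sum_comm]
    refine Finset.sum_congr rfl fun v _ => ?_
    rw [← Finset.sum_filter]
    have : (Finset.univ.filter fun w => w ∈ percoComp G x u) = (percoComp G x u).toFinset := by
      ext w; simp
    rw [this, sum_comp_const]
    have : (compSize G x u : ℝ) ≠ 0 := by
      have := size_pos x u
      positivity
    field_simp
  rw [h2]
  have h4 : b * (Phi k G x * (1 - (Phi k G x + k) / Fintype.card V))
      = ∑ w, phi k (compSize G x w) * (b * (1 - (Phi k G x + k) / Fintype.card V)) := by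
    rw [← Finset.sum_mul]
    change _ = Phi k G x * _
    ring
  rw [h4]
  refine Finset.sum_le_sum fun w _ => ?_
  have hs := size_pos x w
  have hs' : (0:ℝ) < compSize G x w := by exact_mod_cast hs
  split_ifs with hw
  · have h5 := boundary_ge hb hG (S := percoComp G x w) hs
    change b * (1 - (compSize G x w : ℝ) / Fintype.card V) * compSize G x w ≤ _ at h5
    rw [le_div_iff₀ hs']
    refine le_trans (mul_le_mul_of_nonneg_right ?_ hs'.le) h5
    have hN : (0:ℝ) < Fintype.card V := by exact_mod_cast hs.trans (size_le x w)
    have h6 : (compSize G x w : ℝ) / Fintype.card V ≤ (Phi k G x + k) / Fintype.card V := by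
      have := size_sub_le_Phi k x w
      gcongr; linarith
    have h7 : (compSize G x w : ℝ) / Fintype.card V ≤ 1 := by
      rw [div_le_one hN]; exact_mod_cast size_le x w
    have h8 := phi_nonneg k (compSize G x w)
    have h9 := phi_le_one hk0 (compSize G x w)
    set A := (Phi k G x + k) / Fintype.card V
    set B := (compSize G x w : ℝ) / Fintype.card V
    calc phi k (compSize G x w) * (b * (1 - A)) ≤ phi k (compSize G x w) * (b * (1 - B)) := by
          gcongr
      _ ≤ 1 * (b * (1 - B)) := by
          apply mul_le_mul_of_nonneg_right h9
          exact mul_nonneg hb.le (by linarith)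
      _ = _ := by ring
  · have : phi k (compSize G x w) = 0 := by
      unfold phi
      apply max_eq_left
      rw [sub_nonpos, one_le_div hs']
      linarith
    rw [this]; simp

/-- ball around a set -/
def nball (G : SimpleGraph V) (S : Set V) : ℕ → Set V
  | 0 => S
  | r + 1 => {v | v ∈ nball G S r ∨ ∃ u ∈ nball G S r, G.Adj u v}

lemma nball_succ (S : Set V) (r : ℕ) : nball G S r ⊆ nball G S (r+1) := fun _ h => Or.inl h

lemma nball_meet (S T : Set V) (r : ℕ) : ∀ (s : ℕ) (z : V), z ∈ nball G T r → z ∈ nball G S s →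
    ∃ v ∈ T, v ∈ nball G S (s + r) := by
  induction r with
  | zero => intro s z h1 h2; exact ⟨z, h1, h2⟩
  | succ r ih =>
    intro s z h1 h2
    rcases h1 with h1 | ⟨u, hu, huz⟩
    · obtain ⟨v, hv, hv'⟩ := ih s z h1 h2
      exact ⟨v, hv, nball_succ _ _ hv'⟩
    · obtain ⟨v, hv, hv'⟩ := ih (s+1) u hu (Or.inr ⟨z, h2, huz.symm⟩)
      exact ⟨v, hv, by rw [show s + (r+1) = s + 1 + r by ring]; exact hv'⟩

lemma nball_grow {b : ℝ} {d : ℕ} (hd0 : 0 < d) (hd : DegreeLE G d)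
    (hG : CheegerGT G b) {S : Set V} (r : ℕ)
    (h : 2 * (nball G S r).ncard ≤ Nat.card V) (hpos : 0 < (nball G S r).ncard) :
    (1 + b / d) * (nball G S r).ncard ≤ (nball G S (r+1)).ncard := by
  have h1 := hG _ hpos h
  have h2 : (edgeBoundaryCard G (nball G S r) : ℝ)
      ≤ ((nball G S (r+1) \ nball G S r).ncard : ℝ) * d := by
    rw [ebc_eq, Finset.sum_comm, Set.ncard_eq_toFinset_card', ← nsmul_eq_mul, ← Finset.sum_const]
    rw [← Finset.sum_subset (Finset.subset_univ (nball G S (r+1) \ nball G S r).toFinset)]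
    · refine Finset.sum_le_sum fun v _ => le_trans (Finset.sum_le_sum fun u _ => ?_) (deg_sum hd v)
      by_cases ha : G.Adj u v
      · simp only [ha, ha.symm, true_and, if_true]; split_ifs <;> norm_num
      · have : ¬ G.Adj v u := fun h => ha h.symm
        simp [ha, this]
    · intro v _ hv
      refine Finset.sum_eq_zero fun u _ => ?_
      rw [if_neg]
      rintro ⟨h1, h2, h3⟩
      apply hv
      rw [Set.mem_toFinset]
      exact ⟨Or.inr ⟨u, h2, h1⟩, h3⟩
  rw [Set.cast_ncard_sdiff (nball_succ S r) (Set.toFinite _)] at h2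
  have hd' : (0:ℝ) < d := by exact_mod_cast hd0
  have h3 : b * (nball G S r).ncard / d
      ≤ ((nball G S (r+1)).ncard : ℝ) - (nball G S r).ncard := by
    rw [div_le_iff₀ hd']; linarith
  have : (1 + b / d) * ((nball G S r).ncard : ℝ)
    = (nball G S r).ncard + b * (nball G S r).ncard / d := by ring
  linarith

lemma nball_big {b : ℝ} (hb : 0 < b) {d : ℕ} (hd0 : 0 < d) (hd : DegreeLE G d)
    (hG : CheegerGT G b) {S : Set V} {t : ℝ} (ht : 0 < t) (hS : t ≤ S.ncard) (r : ℕ) :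
    Nat.card V < 2 * (nball G S r).ncard ∨ (1 + b / d) ^ r * t ≤ (nball G S r).ncard := by
  have hS0 : 0 < S.ncard := by
    have : (0:ℝ) < S.ncard := ht.trans_le hS
    exact_mod_cast this
  have hpos : ∀ r, 0 < (nball G S r).ncard := by
    intro r
    induction r with
    | zero => exact hS0
    | succ r ih => exact ih.trans_le (Set.ncard_le_ncard (nball_succ S r) (Set.toFinite _))
  induction r with
  | zero => right; simpa [nball] using hS
  | succ r ih =>
    by_cases h : 2 * (nball G S r).ncard ≤ Nat.card V
    · right
      have h1 := nball_grow hd0 hd hG r h (hpos r)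
      rcases ih with ih | ih
      · omega
      · refine le_trans ?_ h1
        rw [pow_succ, mul_comm (_ ^ r), mul_assoc]
        have : 0 ≤ b / d := by positivity
        gcongr
    · left
      have := Set.ncard_le_ncard (nball_succ (G := G) S r) (Set.toFinite _)
      omega

lemma sets_meet {b : ℝ} (hb : 0 < b) {d : ℕ} (hd0 : 0 < d) (hd : DegreeLE G d)
    (hG : CheegerGT G b) {S T : Set V} {t : ℝ} (ht : 0 < t) (hS : t ≤ S.ncard) (hT : t ≤ T.ncard)
    {r : ℕ} (hr : (Fintype.card V : ℝ) < 2 * ((1 + b / d) ^ r * t)) :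
    ∃ v ∈ T, v ∈ nball G S (2 * r) := by
  have key : ∀ S : Set V, t ≤ S.ncard → Nat.card V < 2 * (nball G S r).ncard := by
    intro S hS
    rcases nball_big hb hd0 hd hG ht hS r with h | h
    · exact h
    · have : (Fintype.card V : ℝ) < 2 * (nball G S r).ncard := by linarith
      rw [Nat.card_eq_fintype_card]
      exact_mod_cast this
  have h1 := key S hS
  have h2 := key T hT
  have : (nball G T r ∩ nball G S r).Nonempty := by
    rw [Set.nonempty_iff_ne_empty]
    intro h0
    have h3 := Set.ncard_union_eq (Set.disjoint_iff_inter_eq_empty.2 h0)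
    have h4 := Set.ncard_le_card (nball G T r ∪ nball G S r)
    omega
  obtain ⟨z, hz1, hz2⟩ := this
  obtain ⟨v, hv, hv'⟩ := nball_meet S T r r z hz1 hz2
  exact ⟨v, hv, by rw [two_mul]; exact hv'⟩

end Gr2

section Gr3
open Classical

variable {V : Type} [Fintype V] {G : SimpleGraph V}

lemma size_le_largest (x : G.edgeSet → Bool) (v : V) : compSize G x v ≤ largestComp G x := by
  apply le_csSup
  · refine ⟨Fintype.card V, ?_⟩
    rintro _ ⟨u, rfl⟩
    exact size_le x u
  · exact ⟨v, rfl⟩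

lemma exists_largest [Nonempty V] (x : G.edgeSet → Bool) :
    ∃ v, compSize G x v = largestComp G x := by
  have : largestComp G x ∈ Set.range (compSize G x) := by
    apply Nat.sSup_mem (Set.range_nonempty _)
    refine ⟨Fintype.card V, ?_⟩
    rintro _ ⟨u, rfl⟩
    exact size_le x u
  exact this

lemma largest_mono {x y : G.edgeSet → Bool} (h : x ≤ y) : largestComp G x ≤ largestComp G y := by
  rcases isEmpty_or_nonempty V with hV | hV
  · simp [largestComp, Set.range_eq_empty]
  · obtain ⟨v, hv⟩ := exists_largest x
    rw [← hv]
    exact (size_mono h v).trans (size_le_largest y v)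

/-- accumulated differences along paths -/
def Rj (k : ℝ) (G : SimpleGraph V) : ℕ → (G.edgeSet → Bool) → V → ℝ
  | 0 => fun _ _ => 0
  | j + 1 => fun x v => ∑ u, if h : G.Adj v u then
      gr (Phi k G) ⟨s(v,u), h⟩ x + Rj k G j (Function.update x ⟨s(v,u), h⟩ true) u else 0

lemma Rj_nonneg {k : ℝ} (hk : 0 ≤ k) (j : ℕ) : ∀ (x : G.edgeSet → Bool) (v : V),
    0 ≤ Rj k G j x v := by
  induction j with
  | zero => intro x v; exact le_rfl
  | succ j ih =>
    intro x v
    refine Finset.sum_nonneg fun u _ => ?_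
    split_ifs
    · exact add_nonneg (gr_nonneg hk _ _) (ih _ _)
    · exact le_rfl

lemma Rj_succ {k : ℝ} (hk : 0 ≤ k) (j : ℕ) : ∀ (x : G.edgeSet → Bool) (v : V),
    Rj k G j x v ≤ Rj k G (j+1) x v := by
  induction j with
  | zero => intro x v; exact Rj_nonneg hk 1 x v
  | succ j ih =>
    intro x v
    refine Finset.sum_le_sum fun u _ => ?_
    split_ifs
    · exact add_le_add le_rfl (ih _ _)
    · exact le_rfl

lemma Rj_path {k : ℝ} (hk : 0 ≤ k) (S : Set V) (j : ℕ) : ∀ (x : G.edgeSet → Bool) (v : V),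
    v ∈ nball G S j → ∃ w ∈ S, ∃ y, x ≤ y ∧ w ∈ percoComp G y v ∧
      Phi k G y - Phi k G x ≤ Rj k G j x v := by
  induction j with
  | zero =>
    intro x v hv
    exact ⟨v, hv, x, le_rfl, self_mem_comp x v, by simp [Rj]⟩
  | succ j ih =>
    intro x v hv
    rcases hv with hv | ⟨u, hu, huv⟩
    · obtain ⟨w, hw, y, h1, h2, h3⟩ := ih x v hv
      exact ⟨w, hw, y, h1, h2, h3.trans (Rj_succ hk j x v)⟩
    · have hvu : G.Adj v u := huv.symm
      obtain ⟨w, hw, y, h1, h2, h3⟩ := ih (Function.update x ⟨s(v,u), hvu⟩ true) u hu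
      refine ⟨w, hw, y, (le_update _ _).trans h1, ?_, ?_⟩
      · have : (percoGraph G y).Adj v u := perco_mono h1 (by
          rw [perco_adj]; exact ⟨hvu, by simp⟩)
        exact SimpleGraph.Reachable.trans this.reachable h2
      · have h4 : gr (Phi k G) ⟨s(v,u), hvu⟩ x
            + Rj k G j (Function.update x ⟨s(v,u), hvu⟩ true) u ≤ Rj k G (j+1) x v := by
          have := Finset.single_le_sum (f := fun u => if h : G.Adj v u then
              gr (Phi k G) ⟨s(v,u), h⟩ x + Rj k G j (Function.update x ⟨s(v,u), h⟩ true) u else 0)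
              (s := Finset.univ) (fun u _ => by
                split_ifs
                · exact add_nonneg (gr_nonneg hk _ _) (Rj_nonneg hk _ _ _)
                · exact le_rfl) (Finset.mem_univ u)
          simp only [dif_pos hvu] at this
          exact this
        have h5 := Phi_mono hk (update_le' x ⟨s(v,u), hvu⟩)
        unfold gr at h4
        linarith

lemma Rj_exp {k : ℝ} (hk : 0 ≤ k) {d : ℕ} (hd : DegreeLE G d) {p B : ℝ}
    (hp : p ∈ Set.Icc (0:ℝ) 1) (hp0 : 0 < p) (hB1 : 1 ≤ B) (hB : d / p ≤ B) (j : ℕ) :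
    ∑ v, ex p (fun x => Rj k G j x v)
      ≤ 2 * (∑ e, ex p (gr (Phi k G) e)) * (j * B ^ j) := by
  set D := ∑ e, ex p (gr (Phi k G) e) with hD
  have hD0 : 0 ≤ D := Finset.sum_nonneg fun e _ => ex_nonneg hp (gr_nonneg hk e)
  induction j with
  | zero => simp [Rj, ex]
  | succ j ih =>
    have h1 : ∀ v, ex p (fun x => Rj k G (j+1) x v)
        ≤ ∑ u, ((if h : G.Adj v u then ex p (gr (Phi k G) ⟨s(v,u), h⟩) else 0)
          + (if G.Adj v u then 1 else 0) * (p⁻¹ * ex p (fun x => Rj k G j x u))) := by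
      intro v
      simp only [Rj]
      rw [ex_sum]
      refine Finset.sum_le_sum fun u _ => ?_
      by_cases h : G.Adj v u
      · simp only [h, dif_pos, if_true, one_mul]
        rw [ex_add]
        have := ex_update hp (f := fun x => Rj k G j x u) (fun x => Rj_nonneg hk j x u)
          ⟨s(v,u), h⟩
        have h2 : ex p (fun x => Rj k G j (Function.update x ⟨s(v,u), h⟩ true) u)
            ≤ p⁻¹ * ex p (fun x => Rj k G j x u) := by
          rw [inv_mul_eq_div, le_div_iff₀ hp0]; linarith
        linarith
      · simp [h, ex]
    have h2 : ∑ v, ∑ u, (if G.Adj v u then (1:ℝ) else 0) * (p⁻¹ * ex p (fun x => Rj k G j x u))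
        ≤ B * ∑ u, ex p (fun x => Rj k G j x u) := by
      rw [Finset.sum_comm, Finset.mul_sum]
      refine Finset.sum_le_sum fun u _ => ?_
      rw [← Finset.sum_mul]
      have h3 : ∑ v, (if G.Adj v u then (1:ℝ) else 0) ≤ d := by
        simpa only [G.adj_comm] using deg_sum hd u
      have h4 : 0 ≤ ex p (fun x => Rj k G j x u) := ex_nonneg hp fun x => Rj_nonneg hk j x u
      calc _ ≤ (d:ℝ) * (p⁻¹ * ex p (fun x => Rj k G j x u)) := by
            apply mul_le_mul_of_nonneg_right h3; positivity
        _ = d / p * ex p (fun x => Rj k G j x u) := by ring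
        _ ≤ _ := mul_le_mul_of_nonneg_right hB h4
    calc _ ≤ ∑ v, ∑ u, ((if h : G.Adj v u then ex p (gr (Phi k G) ⟨s(v,u), h⟩) else 0)
          + (if G.Adj v u then 1 else 0) * (p⁻¹ * ex p (fun x => Rj k G j x u))) :=
          Finset.sum_le_sum fun v _ => h1 v
      _ = 2 * D + ∑ v, ∑ u, (if G.Adj v u then (1:ℝ) else 0)
            * (p⁻¹ * ex p (fun x => Rj k G j x u)) := by
          simp only [Finset.sum_add_distrib]
          rw [pair_sum (fun e => ex p (gr (Phi k G) e))]
      _ ≤ 2 * D + B * (2 * D * (j * B ^ j)) := by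
          have : 0 ≤ B := by linarith
          have := mul_le_mul_of_nonneg_left ih this
          linarith
      _ ≤ _ := by
          have h5 : 1 ≤ B ^ (j+1) := one_le_pow₀ hB1
          have h6 : 2 * D * 1 ≤ 2 * D * B ^ (j+1) := by gcongr
          push_cast
          rw [pow_succ] at h6 ⊢
          nlinarith

lemma split_big (k : ℝ) (x : G.edgeSet → Bool) {t : ℝ} (ht : 0 < t)
    (h : largestComp G x + t ≤ ({v | k ≤ compSize G x v} : Set V).ncard) :
    ∃ S ⊆ {v | k ≤ compSize G x v}, (∀ u ∈ S, percoComp G x u ⊆ S) ∧ t / 2 ≤ S.ncard ∧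
      t / 2 ≤ ({v | k ≤ compSize G x v} \ S).ncard := by
  set U : Set V := {v | k ≤ compSize G x v} with hU
  set F : Set (Set V) := {S | S ⊆ U ∧ (∀ u ∈ S, percoComp G x u ⊆ S) ∧ t / 2 ≤ S.ncard} with hF
  have hsz : ∀ {u v}, u ∈ percoComp G x v → compSize G x u = compSize G x v := by
    intro u v h; unfold compSize; rw [comp_eq h]
  have hL : (0:ℝ) ≤ largestComp G x := Nat.cast_nonneg _
  have hUF : U ∈ F := by
    refine ⟨subset_rfl, ?_, by linarith⟩
    intro u hu w hw
    change k ≤ compSize G x w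
    rw [hsz hw]; exact hu
  obtain ⟨S, ⟨hS1, hS2, hS3⟩, hmin⟩ := Set.exists_min_image F Set.ncard (Set.toFinite _) ⟨U, hUF⟩
  refine ⟨S, hS1, hS2, hS3, ?_⟩
  by_contra hcon
  push Not at hcon
  rw [Set.cast_ncard_sdiff hS1 (Set.toFinite _)] at hcon
  have hne : S.Nonempty := by
    rw [← Set.ncard_pos]
    have : (0:ℝ) < S.ncard := by linarith
    exact_mod_cast this
  obtain ⟨v, hv⟩ := hne
  have hsub := hS2 v hv
  have hcard := Set.cast_ncard_sdiff (R := ℝ) hsub (Set.toFinite _)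
  have hvL : (compSize G x v : ℝ) ≤ largestComp G x := by exact_mod_cast size_le_largest x v
  have hv1 := size_pos x v
  have hmem : S \ percoComp G x v ∈ F := by
    refine ⟨Set.sdiff_subset.trans hS1, ?_, ?_⟩
    · intro u hu w hw
      refine ⟨hS2 u hu.1 hw, fun hwv => hu.2 ?_⟩
      have := comp_eq hw
      rw [comp_eq hwv] at this
      rw [this]; exact self_mem_comp x u
    · rw [hcard]
      change t / 2 ≤ (S.ncard : ℝ) - compSize G x v
      linarith
  have := hmin _ hmem
  have h2 : (S.ncard : ℝ) ≤ (S \ percoComp G x v).ncard := by exact_mod_cast this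
  rw [hcard] at h2
  change (S.ncard : ℝ) ≤ (S.ncard : ℝ) - compSize G x v at h2
  have : (1:ℝ) ≤ compSize G x v := by exact_mod_cast hv1
  linarith

lemma R_lower {b : ℝ} (hb : 0 < b) {d : ℕ} (hd0 : 0 < d) (hd : DegreeLE G d)
    (hG : CheegerGT G b) {k : ℝ} (hk : 0 < k) {t : ℝ} (ht : 0 < t) {r : ℕ}
    (hr : (Fintype.card V : ℝ) < 2 * ((1 + b / d) ^ r * (t / 4)))
    (x : G.edgeSet → Bool) (h : largestComp G x + t ≤ Phi k G x) :
    t / 4 * k ≤ ∑ v, Rj k G (2 * r) x v := by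
  have hPU : Phi k G x ≤ ({v | k ≤ compSize G x v} : Set V).ncard := by
    have : (({v | k ≤ compSize G x v} : Set V).ncard : ℝ)
        = ∑ v, if k ≤ compSize G x v then (1:ℝ) else 0 := by
      rw [Finset.sum_boole, Set.ncard_eq_toFinset_card']
      congr 2
      ext v; simp
    rw [this]
    refine Finset.sum_le_sum fun v _ => ?_
    split_ifs with hv
    · exact phi_le_one hk.le _
    · apply max_le le_rfl
      have : (0:ℝ) < compSize G x v := by exact_mod_cast size_pos x v
      rw [sub_nonpos, one_le_div this]
      linarith
  obtain ⟨S, hS1, hS2, hS3, hS4⟩ := split_big k x ht (h.trans hPU)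
  set U : Set V := {v | k ≤ compSize G x v} with hU
  set W := S ∩ nball G (U \ S) (2 * r) with hW
  have hbad : ((S \ W).ncard : ℝ) < t / 4 := by
    by_contra hcon
    push Not at hcon
    obtain ⟨v, hv, hv'⟩ := sets_meet hb hd0 hd hG (S := U \ S) (T := S \ W) (t := t / 4)
      (by linarith) (by linarith) hcon hr
    exact hv.2 ⟨hv.1, hv'⟩
  rw [Set.cast_ncard_sdiff Set.inter_subset_left (Set.toFinite _)] at hbad
  have hWc : t / 4 ≤ W.ncard := by linarith
  have hRW : ∀ v ∈ W, k ≤ Rj k G (2 * r) x v := by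
    rintro v ⟨hv1, hv2⟩
    obtain ⟨w, hw, y, h1, h2, h3⟩ := Rj_path hk.le (U \ S) (2 * r) x v hv2
    have hwv : w ∉ percoComp G x v := fun h => hw.2 (hS2 v hv1 h)
    have := Phi_gain hk.le h1 hwv h2 (hS1 hv1)
    rw [min_eq_left hw.1] at this
    linarith
  calc t / 4 * k ≤ W.ncard * k := by gcongr
    _ = ∑ v ∈ W.toFinset, k := by rw [Finset.sum_const, nsmul_eq_mul, Set.ncard_eq_toFinset_card']
    _ ≤ ∑ v ∈ W.toFinset, Rj k G (2 * r) x v :=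
        Finset.sum_le_sum fun v hv => hRW v (Set.mem_toFinset.1 hv)
    _ ≤ _ := Finset.sum_le_sum_of_subset_of_nonneg (Finset.subset_univ _)
        fun v _ _ => Rj_nonneg hk.le _ _ _

lemma prob_M {b : ℝ} (hb : 0 < b) {d : ℕ} (hd0 : 0 < d) (hd : DegreeLE G d)
    (hG : CheegerGT G b) {k : ℝ} (hk : 0 < k) {t : ℝ} (ht : 0 < t) {r : ℕ}
    (hr : (Fintype.card V : ℝ) < 2 * ((1 + b / d) ^ r * (t / 4)))
    {p B : ℝ} (hp : p ∈ Set.Icc (0:ℝ) 1) (hp0 : 0 < p) (hB1 : 1 ≤ B) (hB : d / p ≤ B) :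
    t / 4 * k * pb p {x : G.edgeSet → Bool | largestComp G x + t ≤ Phi k G x}
      ≤ 2 * (∑ e, ex p (gr (Phi k G) e)) * ((2 * r : ℕ) * B ^ (2 * r)) := by
  refine le_trans ?_ (Rj_exp hk.le hd hp hp0 hB1 hB (2 * r))
  rw [← ex_sum]
  exact markov hp (fun x => Finset.sum_nonneg fun v _ => Rj_nonneg hk.le _ _ _)
    (fun x hx => R_lower hb hd0 hd hG hk ht hr x hx)

/-- lower bound on `p` -/
lemma p_lower {d : ℕ} (hd : DegreeLE G d) {c α p : ℝ} (hp : p ∈ Set.Icc (0:ℝ) 1)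
    (hc : 1 < c * Fintype.card V)
    (h : α ≤ pb p {x : G.edgeSet → Bool | c * (Fintype.card V : ℝ) ≤ largestComp G x}) :
    c * α ≤ d * p := by
  have hV : Nonempty V := by
    by_contra hV
    rw [not_nonempty_iff] at hV
    simp at hc
    linarith
  have hN : (0:ℝ) < Fintype.card V := by exact_mod_cast Fintype.card_pos
  have h1 := markov hp (A := {x : G.edgeSet → Bool | c * (Fintype.card V : ℝ) ≤ largestComp G x})
    (f := fun x => 2 * ∑ e, if x e then (1:ℝ) else 0) (a := c * Fintype.card V)
    (fun x => by positivity) ?_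
  · rw [ex_smul, ex_sum] at h1
    simp only [ex_coord, Finset.sum_const, nsmul_eq_mul, Finset.card_univ] at h1
    have h2 := card_edges hd
    have h3 : c * Fintype.card V * α ≤ d * Fintype.card V * p := by
      calc _ ≤ c * Fintype.card V * pb p _ := by gcongr
        _ ≤ _ := h1
        _ = (2 * Fintype.card G.edgeSet) * p := by ring
        _ ≤ _ := mul_le_mul_of_nonneg_right h2 hp.1
    have h4 : (c * α) * Fintype.card V ≤ (d * p) * Fintype.card V := by linarith
    exact le_of_mul_le_mul_right h4 hN
  · intro x hx
    obtain ⟨v, hv⟩ := exists_largest x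
    have hx' : c * (Fintype.card V : ℝ) ≤ compSize G x v := by rw [hv]; exact hx
    have h2 : 1 < compSize G x v := by
      have : (1:ℝ) < compSize G x v := by linarith
      exact_mod_cast this
    refine hx'.trans ?_
    rw [← pair_sum (fun e => if x e then (1:ℝ) else 0)]
    have h3 : (compSize G x v : ℝ) = ∑ u ∈ (percoComp G x v).toFinset, 1 := by
      rw [sum_comp_const, mul_one]
    rw [h3]
    refine le_trans (Finset.sum_le_sum fun u hu => ?_) (Finset.sum_le_sum_of_subset_of_nonneg
      (Finset.subset_univ _) fun u _ _ => Finset.sum_nonneg fun w _ => by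
        split_ifs <;> norm_num)
    rw [Set.mem_toFinset] at hu
    have h4 : 1 < (percoComp G x u).ncard := by rw [comp_eq hu]; exact h2
    obtain ⟨w, hw, hwu⟩ := Set.exists_ne_of_one_lt_ncard h4 u
    have h5 := (SimpleGraph.reachable_iff_reflTransGen _ _).1 hw
    rcases Relation.ReflTransGen.cases_head h5 with h6 | ⟨z, hz, -⟩
    · exact absurd h6.symm hwu
    · rw [perco_adj] at hz
      obtain ⟨ha, hz⟩ := hz
      refine le_trans ?_ (Finset.single_le_sum (fun w _ => ?_) (Finset.mem_univ z))
      · simp [ha, hz]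
      · split_ifs <;> norm_num

end Gr3

section Gr4
open Classical

variable {V : Type} [Fintype V] {G : SimpleGraph V}

lemma var_Phi {d : ℕ} (hd : DegreeLE G d) {k : ℝ} (hk : 0 ≤ k) {p : ℝ}
    (hp : p ∈ Set.Icc (0:ℝ) 1) :
    ex p (fun x => Phi k G x ^ 2) - ex p (Phi k G) ^ 2 ≤ d * Fintype.card V * k ^ 2 := by
  refine (var_le hp (fun e x => abs_gr_le hk e x)).trans ?_
  have h := card_edges hd
  have h0 : (0:ℝ) ≤ Fintype.card G.edgeSet := Nat.cast_nonneg _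
  have : (Fintype.card G.edgeSet : ℝ) ≤ d * Fintype.card V := by linarith
  gcongr

lemma deriv_lower {b : ℝ} (hb : 0 < b) {d : ℕ} (hd : DegreeLE G d)
    (hG : CheegerGT G b) {k : ℝ} (hk : 1 ≤ k) {p : ℝ} (hp : p ∈ Set.Icc (0:ℝ) 1)
    (hN : (0:ℝ) < Fintype.card V) :
    b * (ex p (Phi k G) * (1 - ex p (Phi k G) / Fintype.card V) - k - d * k ^ 2)
      ≤ 2 * ∑ e, ex p (gr (Phi k G) e) := by
  have h1 := ex_mono hp (fun x => growth (G := G) hb hG hk x)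
  rw [ex_smul, ex_smul, ex_sum] at h1
  refine le_trans ?_ h1
  apply mul_le_mul_of_nonneg_left _ hb.le
  have h2 : (fun x : G.edgeSet → Bool => Phi k G x * (1 - (Phi k G x + k) / Fintype.card V))
      = fun x => (1 - k / Fintype.card V) * Phi k G x
        - (1 / (Fintype.card V : ℝ)) * (Phi k G x ^ 2) := by
    funext x; field_simp; ring
  rw [h2, ex_sub, ex_smul, ex_smul]
  have h3 := var_Phi hd (by linarith : 0 ≤ k) hp
  have h4 : ex p (Phi k G) ≤ Fintype.card V := by
    rw [← ex_const (ι := G.edgeSet) p (Fintype.card V : ℝ)]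
    exact ex_mono hp (fun x => Phi_le (by linarith) x)
  set h := ex p (Phi k G)
  set q := ex p (fun x => Phi k G x ^ 2)
  set N : ℝ := (Fintype.card V : ℝ)
  have h5 : k / N * h ≤ k := by
    rw [div_mul_eq_mul_div, div_le_iff₀ hN]
    exact mul_le_mul_of_nonneg_left h4 (by linarith)
  have h6 : 1 / N * q ≤ h * (h / N) + d * k ^ 2 := by
    have e : h * (h / N) + d * k ^ 2 = 1 / N * (h ^ 2 + d * N * k ^ 2) := by
      field_simp
    rw [e]
    apply mul_le_mul_of_nonneg_left _ (by positivity)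
    linarith
  nlinarith

lemma pb_incr {A : Set (G.edgeSet → Bool)} (hA : ∀ x y, x ≤ y → x ∈ A → y ∈ A) :
    MonotoneOn (fun p => pb p A) (Set.Icc 0 1) := by
  apply ex_monotone
  intro e x
  unfold gr
  have := hA _ _ (update_le x e)
  dsimp only
  split_ifs with h1 h2 h3 <;> simp_all

set_option maxHeartbeats 2000000 in
lemma core {b : ℝ} (hb : 0 < b) {d : ℕ} (hd : DegreeLE G d) (hG : CheegerGT G b)
    {α c : ℝ} (hα0 : 0 < α) (hc : c ∈ Set.Ioo (0:ℝ) 1)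
    {k η : ℝ} {r : ℕ} {δ B : ℝ} (hk : 1 ≤ k) (hη : 0 < η) (hδ0 : 0 < δ)
    (h1 : 1 < c * Fintype.card V)
    (hr : (Fintype.card V : ℝ) < 2 * ((1 + b / d) ^ r * (η * Fintype.card V / 4)))
    (hB1 : 1 ≤ B) (hB : d ^ 2 / (c * α) ≤ B)
    (hM : 2 * (2 * Fintype.card V / δ) * ((2 * r : ℕ) * B ^ (2 * r))
      ≤ α / 2 * (η * Fintype.card V / 4 * k))
    (hV : d * Fintype.card V * k ^ 2 < α / 2 * (η * Fintype.card V) ^ 2)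
    (hkN : k ≤ η * Fintype.card V) (hη1 : 2 * η ≤ c / 2) (hη2 : 2 * η ≤ (1 - c) / 2)
    (hk2 : k + d * k ^ 2 ≤ c * (1 - c) / 8 * Fintype.card V)
    {p q : ℝ} (hp : p ∈ Set.Icc (0:ℝ) 1) (hq : q ∈ Set.Icc (0:ℝ) 1) (hpq : q - p = δ)
    (hP : pb p {x : G.edgeSet → Bool | c * (Fintype.card V : ℝ) ≤ largestComp G x} = α)
    (hQ : pb q {x : G.edgeSet → Bool | c * (Fintype.card V : ℝ) ≤ largestComp G x} = 1 - α) :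
    δ * (b * c * (1 - c)) ≤ 256 * η := by
  obtain ⟨hc0, hc1⟩ := hc
  set A : Set (G.edgeSet → Bool) := {x | c * (Fintype.card V : ℝ) ≤ largestComp G x} with hA
  have hpl := p_lower hd hp h1 hP.ge
  have hd0 : 0 < d := by
    rcases Nat.eq_zero_or_pos d with h | h
    · subst h; simp at hpl; nlinarith [mul_pos hc0 hα0]
    · exact h
  have hdR : (0:ℝ) < d := by exact_mod_cast hd0
  have hcα : 0 < c * α := by positivity
  have hp0 : 0 < p := by
    by_contra h; push Not at h; nlinarith
  set N : ℝ := (Fintype.card V : ℝ) with hNdef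
  have hN : 0 < N := by
    by_contra h; push Not at h; nlinarith
  have hk0 : 0 ≤ k := by linarith
  set h : ℝ → ℝ := fun p => ex p (Phi k G) with hh
  have hder : ∀ s, HasDerivAt h (∑ e, ex s (gr (Phi k G) e)) s := fun s => hasDerivAt_ex s _
  have hmono : MonotoneOn h (Set.Icc 0 1) := ex_monotone (fun e x => gr_nonneg hk0 e x)
  have hcont : ∀ s t, ContinuousOn h (Set.Icc s t) :=
    fun s t u _ => (hder u).continuousAt.continuousWithinAt
  set m := (p + q) / 2 with hm
  have hmq : m < q := by rw [hm]; linarith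
  obtain ⟨s, hs, hsD⟩ := exists_hasDerivAt_eq_slope h _ hmq (hcont _ _) (fun u _ => hder u)
  have hsI : s ∈ Set.Icc (0:ℝ) 1 := ⟨by linarith [hp.1, hs.1], by linarith [hq.2, hs.2]⟩
  have hps : p < s := by linarith [hs.1]
  have hhq : h q ≤ N := by
    rw [← ex_const (ι := G.edgeSet) q N]
    exact ex_mono hq (fun x => Phi_le hk0 x)
  have hmI : m ∈ Set.Icc (0:ℝ) 1 := ⟨by linarith [hp.1], by linarith [hq.2]⟩
  have hhm : 0 ≤ h m := ex_nonneg hmI (fun x => Phi_nonneg k x)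
  have hDs : ∑ e, ex s (gr (Phi k G) e) ≤ 2 * N / δ := by
    have : q - m = δ / 2 := by rw [hm]; linarith
    rw [hsD, this, div_le_div_iff₀ (by linarith) hδ0]
    linarith [mul_le_mul_of_nonneg_right (show h q - h m ≤ N by linarith) hδ0.le]
  have hAs : pb s A ≤ 1 - α := by
    rw [← hQ]
    refine pb_incr ?_ hsI hq hs.2.le
    intro x y hxy hx
    have : (largestComp G x : ℝ) ≤ largestComp G y := by exact_mod_cast largest_mono hxy
    exact le_trans hx this
  set M : Set (G.edgeSet → Bool) := {x | largestComp G x + η * N ≤ Phi k G x} with hMdef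
  have hηN : 0 < η * N := by positivity
  have hMs : pb s M ≤ α / 2 := by
    have hBs : d / s ≤ B := by
      refine le_trans ?_ hB
      rw [div_le_div_iff₀ (by linarith) hcα]
      linarith [mul_le_mul_of_nonneg_left hpl hdR.le, mul_pos (mul_pos hdR hdR) (sub_pos.2 hps)]
    have := prob_M hb hd0 hd hG (by linarith) hηN (by linarith [hr]) hsI (by linarith) hB1 hBs
      (r := r) (k := k)
    have h3 : 2 * (∑ e, ex s (gr (Phi k G) e)) * ((2 * r : ℕ) * B ^ (2 * r))
        ≤ 2 * (2 * N / δ) * ((2 * r : ℕ) * B ^ (2 * r)) :=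
      mul_le_mul_of_nonneg_right (mul_le_mul_of_nonneg_left hDs (by norm_num))
        (mul_nonneg (Nat.cast_nonneg _) (pow_nonneg (by linarith) _))
    have h4 : η * N / 4 * k * pb s M ≤ η * N / 4 * k * (α / 2) := by
      linarith
    exact le_of_mul_le_mul_left h4 (by positivity)
  have hC : α / 2 ≤ pb s (A ∪ M)ᶜ := by
    rw [pb_compl]
    have := pb_union hsI A M
    linarith
  -- upper bound for h s
  have hup : h s ≤ c * N + 2 * (η * N) := by
    by_contra hcon
    push Not at hcon
    have h2 := cheb hsI (A := (A ∪ M)ᶜ) (f := Phi k G) (s := η * N) (by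
      intro x hx
      rw [Set.mem_compl_iff, Set.mem_union, not_or] at hx
      obtain ⟨hx1, hx2⟩ := hx
      have hx1' : (largestComp G x : ℝ) < c * N := not_le.1 hx1
      have hx2' : Phi k G x < largestComp G x + η * N := not_le.1 hx2
      change c * N + 2 * (η * N) < ex s (Phi k G) at hcon
      rw [sub_sq_comm]
      exact pow_le_pow_left₀ hηN.le (by linarith) 2)
    have h3 := var_Phi hd hk0 hsI (k := k) (G := G)
    have h4 : (η * N) ^ 2 * (α / 2) ≤ (η * N) ^ 2 * pb s (A ∪ M)ᶜ := by gcongr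
    linarith
  -- lower bound for h p
  have hlow : c * N - 2 * (η * N) ≤ h p := by
    by_contra hcon
    push Not at hcon
    have hne : Nonempty V := by
      rw [← Fintype.card_pos_iff]
      exact Nat.cast_pos.1 hN
    have h2 := cheb hp (A := A) (f := Phi k G) (s := η * N) (by
      intro x hx
      obtain ⟨v, hv⟩ := exists_largest x
      have h5 := size_sub_le_Phi k x v
      rw [hv] at h5
      have hx' : c * N ≤ largestComp G x := hx
      change ex p (Phi k G) < c * N - 2 * (η * N) at hcon
      exact pow_le_pow_left₀ hηN.le (by linarith) 2)
    have h3 := var_Phi hd hk0 hp (k := k) (G := G)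
    rw [hP] at h2
    linarith [mul_pos hα0 (pow_pos hηN 2)]
  obtain ⟨u, hu, huD⟩ := exists_hasDerivAt_eq_slope h _ hps (hcont _ _) (fun u _ => hder u)
  have huI : u ∈ Set.Icc (0:ℝ) 1 := ⟨by linarith [hp.1, hu.1], by linarith [hsI.2, hu.2]⟩
  have hu1 : c * N - 2 * (η * N) ≤ h u := hlow.trans (hmono hp huI hu.1.le)
  have hu2 : h u ≤ c * N + 2 * (η * N) := (hmono huI hsI hu.2.le).trans hup
  have hu1' : c / 2 * N ≤ h u := by linarith [mul_le_mul_of_nonneg_right hη1 hN.le]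
  have hu2' : (1 - c) / 2 ≤ 1 - h u / N := by
    have : h u / N ≤ (1 + c) / 2 := by
      rw [div_le_iff₀ hN]; linarith [mul_le_mul_of_nonneg_right hη2 hN.le]
    linarith
  have hD := deriv_lower hb hd hG hk huI hN
  change b * (h u * (1 - h u / N) - k - d * k ^ 2) ≤ _ at hD
  rw [huD] at hD
  have h7 : c / 2 * N * ((1 - c) / 2) ≤ h u * (1 - h u / N) :=
    mul_le_mul hu1' hu2' (by linarith) (le_trans (by positivity) hu1')
  have h8 : b * (c * (1 - c) / 8 * N) ≤ 2 * ((h s - h p) / (s - p)) := by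
    refine le_trans ?_ hD
    apply mul_le_mul_of_nonneg_left _ hb.le
    linarith
  have hsp : δ / 2 ≤ s - p := by linarith [hs.1]
  have hsp0 : 0 < s - p := by linarith
  have h9 : (h s - h p) / (s - p) ≤ 4 * (η * N) / (δ / 2) := by
    apply div_le_div₀ (by positivity) (by linarith) (by linarith) hsp
  have h10 : b * (c * (1 - c) / 8 * N) ≤ 2 * (4 * (η * N) / (δ / 2)) := by linarith
  have h11 : 2 * (4 * (η * N) / (δ / 2)) = (16 * η * N) / δ := by field_simp; ring
  rw [h11, le_div_iff₀ hδ0] at h10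
  have h12 : (δ * (b * c * (1 - c))) * N ≤ (256 * η) * N := by linarith [hηN]
  exact le_of_mul_le_mul_right h12 hN

lemma ev_exp (C a : ℝ) (n : ℕ) (ha : 0 < a) : ∀ᶠ L : ℝ in atTop, C * L ^ n < Real.exp (a * L) := by
  have h := isLittleO_pow_exp_pos_mul_atTop n ha
  have h2 := h.def (c := 1 / (|C| + 1)) (by positivity)
  filter_upwards [h2, eventually_gt_atTop 0] with L hL hL0
  rw [Real.norm_of_nonneg (by positivity), Real.norm_of_nonneg (Real.exp_pos _).le,
    div_mul_eq_mul_div, one_mul, le_div_iff₀ (by positivity)] at hL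
  have : C * L ^ n ≤ |C| * L ^ n := by gcongr; exact le_abs_self C
  have h3 : 0 < L ^ n := by positivity
  nlinarith

set_option maxHeartbeats 2000000 in
lemma asym {b : ℝ} (hb : 0 < b) (d : ℕ) {α c : ℝ} (hα0 : 0 < α)
    (hc : c ∈ Set.Ioo (0:ℝ) 1) :
    ∃ L0 : ℝ, 1 ≤ L0 ∧ ∀ {V : Type} [Fintype V] {G : SimpleGraph V}, DegreeLE G d → CheegerGT G b →
      0 < Fintype.card V → L0 ≤ Real.log (Fintype.card V) → ∀ {p q : ℝ},
      p ∈ Set.Icc (0:ℝ) 1 → q ∈ Set.Icc (0:ℝ) 1 → 1 / Real.log (Fintype.card V) ≤ q - p →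
      pb p {x : G.edgeSet → Bool | c * (Fintype.card V : ℝ) ≤ largestComp G x} = α →
      pb q {x : G.edgeSet → Bool | c * (Fintype.card V : ℝ) ≤ largestComp G x} = 1 - α →
      (q - p) * (b * c * (1 - c)) ≤ 256 * (1 / Real.log (Fintype.card V)) := by
  have hc0 := hc.1
  have hc1 : 0 < 1 - c := by linarith [hc.2]
  rcases Nat.eq_zero_or_pos d with hd0 | hd0
  · subst hd0
    refine ⟨max 1 (1 / c), le_max_left _ _, ?_⟩
    intro V _ G hd hG hV hL p q hp hq _ hP hQ
    exfalso
    have h1 : 1 / c < Fintype.card V := by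
      refine lt_of_le_of_lt ((le_max_right _ _).trans hL) ?_
      have : (0:ℝ) < Fintype.card V := by exact_mod_cast hV
      linarith [Real.log_le_sub_one_of_pos this]
    rw [div_lt_iff₀ hc0] at h1
    have := p_lower hd hp (by linarith) hP.ge
    simp at this
    nlinarith [mul_pos hc0 hα0]
  have hdR : (0:ℝ) < d := by exact_mod_cast hd0
  set B : ℝ := 1 + d ^ 2 / (c * α) with hBdef
  have hB0 : 0 ≤ d ^ 2 / (c * α) := by positivity
  have hB1 : 1 ≤ B := by linarith
  have hlB : 0 ≤ Real.log B := Real.log_nonneg hB1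
  set ε : ℝ := 1 / (16 * (Real.log B + 1)) with hε
  have hε0 : 0 < ε := by positivity
  have hεB : 2 * ε * Real.log B ≤ 1 / 8 := by
    have : 16 * (Real.log B + 1) * ε = 1 := by rw [hε]; field_simp
    linarith
  set g : ℝ := Real.log (1 + b / d) with hg
  have hbd : 0 < b / d := by positivity
  have hg0 : 0 < g := Real.log_pos (by linarith)
  have key : ∀ᶠ L : ℝ in atTop,
      2 * L ^ 1 < Real.exp ((g * ε) * L) ∧
      (64 * (ε + 1) * B ^ 2 / α) * L ^ 3 < Real.exp ((1 / 8) * L) ∧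
      (2 * d / α) * L ^ 2 < Real.exp ((1 / 2) * L) ∧
      1 * L ^ 1 < Real.exp ((3 / 4) * L) ∧
      ((1 + d) * 8 / (c * (1 - c))) * L ^ 0 < Real.exp ((1 / 2) * L) ∧
      (1 / c) * L ^ 0 < Real.exp (1 * L) := by
    exact (ev_exp _ _ _ (by positivity)).and ((ev_exp _ _ _ (by positivity)).and
      ((ev_exp _ _ _ (by positivity)).and ((ev_exp _ _ _ (by positivity)).and
      ((ev_exp _ _ _ (by positivity)).and (ev_exp _ _ _ (by positivity))))))
  obtain ⟨L1, hL1⟩ := eventually_atTop.1 key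
  refine ⟨max (max 1 L1) (max (4 / c) (4 / (1 - c))),
    (le_max_left _ _).trans (le_max_left _ _), ?_⟩
  intro V _ G hd hG hV hL p q hp hq hpq hP hQ
  set N : ℝ := (Fintype.card V : ℝ) with hN
  have hN0 : 0 < N := by rw [hN]; exact_mod_cast hV
  set L := Real.log N with hLdef
  have hNL : Real.exp L = N := Real.exp_log hN0
  have hL1' : 1 ≤ L := ((le_max_left _ _).trans (le_max_left _ _)).trans hL
  have hLc : 4 / c ≤ L := ((le_max_left _ _).trans (le_max_right _ _)).trans hL
  have hLc' : 4 / (1 - c) ≤ L := ((le_max_right _ _).trans (le_max_right _ _)).trans hL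
  have hL0 : 0 < L := by linarith
  obtain ⟨e1, e2, e3, e4, e5, e6⟩ := hL1 L (((le_max_right _ _).trans (le_max_left _ _)).trans hL)
  rw [one_mul, hNL, pow_zero, mul_one, div_lt_iff₀ hc0] at e6
  rw [pow_zero, mul_one] at e5
  rw [pow_one] at e1 e4
  rw [one_mul] at e4
  set k := Real.exp (L / 4) with hkdef
  have hk1 : 1 ≤ k := Real.one_le_exp (by linarith)
  have hk2 : Real.exp (1 / 2 * L) = k ^ 2 := by
    rw [hkdef, ← Real.exp_nat_mul]; congr 1; push_cast; ring
  have hk3 : Real.exp (3 / 4 * L) = k ^ 3 := by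
    rw [hkdef, ← Real.exp_nat_mul]; congr 1; push_cast; ring
  have hk4 : N = k ^ 4 := by
    rw [← hNL, hkdef, ← Real.exp_nat_mul]; congr 1; push_cast; ring
  rw [hk2] at e3 e5
  rw [hk3] at e4
  have hk0 : 0 < k := by linarith
  set r := ⌈ε * L⌉₊ with hrdef
  have hr1 : ε * L ≤ r := Nat.le_ceil _
  have hr2 : (r : ℝ) < ε * L + 1 := Nat.ceil_lt_add_one (by positivity)
  have hδ : 0 < q - p := lt_of_lt_of_le (by positivity) hpq
  have hpow : Real.exp ((g * ε) * L) ≤ (1 + b / d) ^ r := by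
    have : (1 + b / d) ^ r = Real.exp (r * g) := by
      rw [Real.exp_nat_mul, hg, Real.exp_log (by linarith)]
    rw [this]
    apply Real.exp_le_exp.2
    linarith [mul_le_mul_of_nonneg_left hr1 hg0.le]
  have hpowB : B ^ (2 * r) ≤ B ^ 2 * Real.exp ((1 / 8) * L) := by
    have h1 : B ^ (2 * r) = Real.exp ((2 * r : ℕ) * Real.log B) := by
      rw [Real.exp_nat_mul, Real.exp_log (by linarith)]
    have h2 : B ^ 2 = Real.exp ((2 : ℕ) * Real.log B) := by
      rw [Real.exp_nat_mul, Real.exp_log (by linarith)]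
    rw [h1, h2, ← Real.exp_add]
    apply Real.exp_le_exp.2
    push_cast
    linarith [mul_le_mul_of_nonneg_right hr2.le hlB, mul_le_mul_of_nonneg_right hεB hL0.le]
  have hηN : (1 / L) * N = N / L := by ring
  refine core hb hd hG hα0 hc (k := k) (η := 1 / L) (r := r) (B := B) hk1 (by positivity) hδ
    (by linarith) ?_ hB1 (by linarith) ?_ ?_ ?_ ?_ ?_ ?_ hp hq rfl hP hQ
  · have : 2 * ((1 + b / d) ^ r * (1 / L * N / 4)) = (1 + b / d) ^ r * N / (2 * L) := by
      field_simp; ring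
    rw [this, lt_div_iff₀ (by positivity)]
    linarith [mul_lt_mul_of_pos_right (e1.trans_le hpow) hN0]
  · have h1 : 2 * N / (q - p) ≤ 2 * N * L := by
      rw [div_le_iff₀ hδ]
      have : 1 ≤ L * (q - p) := by
        rw [div_le_iff₀ hL0] at hpq; linarith
      linarith [mul_le_mul_of_nonneg_left this hN0.le]
    have h2 : (r : ℝ) ≤ (ε + 1) * L := by linarith
    calc 2 * (2 * N / (q - p)) * ((2 * r : ℕ) * B ^ (2 * r))
        ≤ 2 * (2 * N * L) * ((2 * ((ε + 1) * L)) * (B ^ 2 * Real.exp ((1 / 8) * L))) := by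
          push_cast; gcongr
      _ = (α * N / (8 * L)) * (((64 * (ε + 1) * B ^ 2 / α) * L ^ 3) * Real.exp ((1 / 8) * L)) := by
          field_simp; ring
      _ ≤ (α * N / (8 * L)) * (Real.exp ((1 / 8) * L) * Real.exp ((1 / 8) * L)) := by gcongr
      _ = α / 2 * (1 / L * N / 4 * k) := by
          rw [← Real.exp_add, hkdef, show 1 / 8 * L + 1 / 8 * L = L / 4 by ring]
          field_simp; ring
  · have : α / 2 * (1 / L * N) ^ 2 = α / 2 / L ^ 2 * N ^ 2 := by field_simp
    rw [this, div_mul_eq_mul_div, lt_div_iff₀ (by positivity)]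
    have h3 : (2 * d / α) * L ^ 2 = (2 * d * L ^ 2) / α := by ring
    rw [h3, div_lt_iff₀ hα0] at e3
    have h4 : N ^ 2 = N * k ^ 2 * k ^ 2 := by rw [hk4]; ring
    rw [h4]
    have : 0 < N * k ^ 2 := by positivity
    linarith [mul_lt_mul_of_pos_left e3 this]
  · rw [hηN, le_div_iff₀ hL0, hk4]
    linarith [mul_lt_mul_of_pos_left e4 hk0]
  · rw [div_le_iff₀ hc0] at hLc
    rw [mul_one_div, div_le_iff₀ hL0]; linarith
  · rw [div_le_iff₀ hc1] at hLc'
    rw [mul_one_div, div_le_iff₀ hL0]; linarith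
  · rw [div_lt_iff₀ (by positivity)] at e5
    change k + d * k ^ 2 ≤ c * (1 - c) / 8 * N
    rw [hk4]
    have : k ≤ k ^ 2 := by linarith [mul_le_mul_of_nonneg_left hk1 hk0.le]
    have h3 : 0 < k ^ 2 := by positivity
    linarith [mul_lt_mul_of_pos_left e5 h3]

lemma event_univ (h : Fintype.card V ≤ 1) {c : ℝ} (hc : c ∈ Set.Ioo (0:ℝ) 1) (p : ℝ) :
    pb p {x : G.edgeSet → Bool | c * (Fintype.card V : ℝ) ≤ largestComp G x} = 1 := by
  have : ∀ x : G.edgeSet → Bool, c * (Fintype.card V : ℝ) ≤ largestComp G x := by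
    intro x
    rcases isEmpty_or_nonempty V with hV | ⟨⟨v⟩⟩
    · simp
    · have h1 : (1:ℝ) ≤ largestComp G x := by
        exact_mod_cast (size_pos x v).trans (size_le_largest x v)
      have h2 : (Fintype.card V : ℝ) ≤ 1 := by exact_mod_cast h
      nlinarith [hc.1, hc.2]
  unfold pb
  simp only [Set.mem_ofPred_eq, this, if_true]
  exact ex_const p 1

end Gr4

/-- the width of the threshold for having a component of size at least `c|V_n|`
is at most `C₃ (log |V_n|)^{-1/3}`, with `C₃` depending only on `c`, `α`, `b`, `d`.
Here `pa` plays the role of `p_{n,α}(c)` and `pb` of `p_{n,1-α}(c)`. -/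
theorem stmt1 (b : ℝ) (hb : 0 < b) (d : ℕ) (α : ℝ) (hα0 : 0 < α) (hα : α < 1 / 2)
    (c : ℝ) (hc : c ∈ Set.Ioo (0 : ℝ) 1) :
    ∃ C3 : ℝ, ∀ (E : ExpanderSeq b d) (n : ℕ) (pa pb : ℝ),
      pa ∈ Set.Icc (0 : ℝ) 1 → pb ∈ Set.Icc (0 : ℝ) 1 →
      probC pa {x : (E.G n).edgeSet → Bool |
          c * (Nat.card (E.V n) : ℝ) ≤ (largestComp (E.G n) x : ℝ)} = α →
      probC pb {x : (E.G n).edgeSet → Bool |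
          c * (Nat.card (E.V n) : ℝ) ≤ (largestComp (E.G n) x : ℝ)} = 1 - α →
      pb - pa ≤ C3 * (Real.log (Nat.card (E.V n))) ^ (-(1 / 3) : ℝ) := by
  classical
  obtain ⟨L0, hL0, H⟩ := asym hb d hα0 hc
  have hc0 := hc.1
  have hc1 : 0 < 1 - c := by linarith [hc.2]
  have hK : 0 < b * c * (1 - c) := by positivity
  refine ⟨max (max 1 (L0 ^ (1 / 3 : ℝ))) (256 / (b * c * (1 - c))), ?_⟩
  intro E n pa q hpa hq hP hQ
  have := E.finV n
  have := Fintype.ofFinite (E.V n)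
  rw [Nat.card_eq_fintype_card] at hP hQ ⊢
  rw [probC_eq] at hP hQ
  set C3 := max (max 1 (L0 ^ (1 / 3 : ℝ))) (256 / (b * c * (1 - c)))
  have hC1 : 1 ≤ C3 := (le_max_left _ _).trans (le_max_left _ _)
  have hC2 : L0 ^ (1 / 3 : ℝ) ≤ C3 := (le_max_right _ _).trans (le_max_left _ _)
  have hC3 : 256 / (b * c * (1 - c)) ≤ C3 := le_max_right _ _
  rcases Nat.lt_or_ge 1 (Fintype.card (E.V n)) with hV | hV
  swap
  · exfalso
    have := event_univ (G := E.G n) hV hc pa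
    have h2 : (1:ℝ) = α := by rw [← this, ← hP]
    linarith
  set L := Real.log (Fintype.card (E.V n)) with hL
  have hLpos : 0 < L := Real.log_pos (by exact_mod_cast hV)
  have hrp : 0 < L ^ (-(1 / 3) : ℝ) := Real.rpow_pos_of_pos hLpos _
  rcases lt_or_ge L L0 with h | h
  · have h1 : 1 ≤ C3 * L ^ (-(1 / 3) : ℝ) := by
      rw [Real.rpow_neg hLpos.le, ← div_eq_mul_inv, one_le_div (Real.rpow_pos_of_pos hLpos _)]
      exact (Real.rpow_le_rpow hLpos.le h.le (by norm_num)).trans hC2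
    linarith [hpa.1, hq.2]
  · have hL1 : 1 ≤ L := hL0.trans h
    have h1 : 1 / L ≤ L ^ (-(1 / 3) : ℝ) := by
      rw [one_div, ← Real.rpow_neg_one]
      exact Real.rpow_le_rpow_of_exponent_le hL1 (by norm_num)
    rcases le_total (q - pa) (1 / L) with h2 | h2
    · nlinarith
    · have h3 := H (E.degree_le n) (E.cheeger_gt n) (by omega) h hpa hq h2
        (by convert hP) (by convert hQ)
      have h4 : q - pa ≤ 256 / (b * c * (1 - c)) * (1 / L) := by
        rw [div_mul_eq_mul_div, le_div_iff₀ hK]; exact h3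
      refine h4.trans (mul_le_mul hC3 h1 (by positivity) (by linarith))
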